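/- arXiv:1611.06699 — 10 statements merged into one kernel-verified Lean document; each statement's English description precedes it below -/
import Mathlib

section
/- For all real numbers s, t, u, v, the limit c(s,t,u,v) := lim_{N→∞} (1/N) ∑_{j=1}^N ({js} − {jt})({ju} − {jv}) exists and is finite; that is, there exists a real number L such that the sequence N ↦ (1/N) ∑_{j=1}^N ({js} − {jt})({ju} − {jv}) tends to L as N → ∞. -/
open Filter Finset

/-- Cesàro mean exists. -/
def HasMeanC (f : ℕ → ℂ) : Prop :=
  ∃ L : ℂ, Tendsto (fun N : ℕ => (1 / (N : ℂ)) * ∑ j ∈ Finset.Icc 1 N, f j) atTop (nhds L)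

lemma HasMeanC.add {f g : ℕ → ℂ} (hf : HasMeanC f) (hg : HasMeanC g) :
    HasMeanC (fun j => f j + g j) := by
  obtain ⟨L, hL⟩ := hf
  obtain ⟨M, hM⟩ := hg
  refine ⟨L + M, (hL.add hM).congr fun N => ?_⟩
  rw [Finset.sum_add_distrib, mul_add]

lemma HasMeanC.const_mul {f : ℕ → ℂ} (hf : HasMeanC f) (c : ℂ) :
    HasMeanC (fun j => c * f j) := by
  obtain ⟨L, hL⟩ := hf
  refine ⟨c * L, (hL.const_mul c).congr fun N => ?_⟩
  rw [← Finset.mul_sum]; ring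

lemma HasMeanC.of_approx {f : ℕ → ℂ}
    (h : ∀ ε : ℝ, 0 < ε → ∃ g, HasMeanC g ∧
      ∀ᶠ N : ℕ in atTop, ∑ j ∈ Finset.Icc 1 N, ‖f j - g j‖ ≤ ε * N) : HasMeanC f := by
  apply cauchySeq_tendsto_of_complete
  rw [Metric.cauchySeq_iff']
  intro ε hε
  obtain ⟨g, ⟨L, hL⟩, hg⟩ := h (ε / 5) (by positivity)
  have h1 := (Metric.tendsto_nhds.1 hL) (ε / 5) (by positivity)
  have h2 : ∀ᶠ N : ℕ in atTop,
      dist ((1 / (N : ℂ)) * ∑ j ∈ Finset.Icc 1 N, f j) L < 2 * (ε / 5) := by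
    filter_upwards [h1, hg, eventually_gt_atTop 0] with N a b hN
    have hN' : (0 : ℝ) < N := by exact_mod_cast hN
    have h3 : dist ((1 / (N : ℂ)) * ∑ j ∈ Finset.Icc 1 N, f j)
        ((1 / (N : ℂ)) * ∑ j ∈ Finset.Icc 1 N, g j) ≤ ε / 5 := by
      rw [dist_eq_norm, ← mul_sub, ← Finset.sum_sub_distrib, norm_mul, norm_div, norm_one,
        Complex.norm_natCast, one_div, inv_mul_le_iff₀ hN']
      refine (norm_sum_le _ _).trans (b.trans (by rw [mul_comm]))
    have := dist_triangle ((1 / (N : ℂ)) * ∑ j ∈ Finset.Icc 1 N, f j)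
        ((1 / (N : ℂ)) * ∑ j ∈ Finset.Icc 1 N, g j) L
    linarith
  obtain ⟨N0, hN0⟩ := eventually_atTop.1 h2
  refine ⟨N0, fun n hn => ?_⟩
  have a := hN0 n hn
  have b := hN0 N0 le_rfl
  have := dist_triangle_right ((1 / (n : ℂ)) * ∑ j ∈ Finset.Icc 1 n, f j)
    ((1 / (N0 : ℂ)) * ∑ j ∈ Finset.Icc 1 N0, f j) L
  linarith

lemma hasMeanC_pow (z : ℂ) (hz : ‖z‖ = 1) : HasMeanC (fun j => z ^ j) := by
  by_cases h1 : z = 1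
  · refine ⟨1, tendsto_const_nhds.congr' ?_⟩
    filter_upwards [eventually_gt_atTop 0] with N hN
    have : (N : ℂ) ≠ 0 := by exact_mod_cast hN.ne'
    simp [h1, this]
  · refine ⟨0, ?_⟩
    rw [tendsto_zero_iff_norm_tendsto_zero]
    have hz1 : 0 < ‖z - 1‖ := norm_pos_iff.2 (sub_ne_zero.2 h1)
    refine squeeze_zero (fun _ => norm_nonneg _) (g := fun N : ℕ => (2 / ‖z - 1‖) / (N : ℝ)) ?_
      (tendsto_const_div_atTop_nhds_zero_nat _)
    intro N
    have e : ∑ j ∈ Finset.Icc 1 N, z ^ j = z * ((z ^ N - 1) / (z - 1)) := by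
      rw [← geom_sum_eq h1, Finset.mul_sum, Finset.range_eq_Ico,
        ← Finset.Ico_add_one_right_eq_Icc, Finset.sum_Ico_eq_sum_range, Finset.sum_Ico_eq_sum_range]
      refine Finset.sum_congr (by simp) fun i _ => ?_
      rw [pow_add]; simp
    rw [e, norm_mul, norm_mul, hz, norm_div, norm_div, norm_one, Complex.norm_natCast, one_mul,
      one_div, div_eq_mul_inv _ (N : ℝ), mul_comm]
    gcongr
    calc ‖z ^ N - 1‖ ≤ ‖z ^ N‖ + ‖(1 : ℂ)‖ := norm_sub_le _ _
      _ = 2 := by rw [norm_pow, hz]; norm_num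

lemma count_small (a ε : ℝ) (hε : 0 < ε) : ∃ δ : ℝ, 0 < δ ∧ ∀ᶠ N : ℕ in atTop,
    (((Finset.Icc 1 N).filter (fun j : ℕ => 1 - δ < Int.fract ((j : ℝ) * a))).card : ℝ)
      ≤ ε * N := by
  by_cases hr : ∃ q : ℕ, 0 < q ∧ ∃ p : ℤ, (q : ℝ) * a = p
  · obtain ⟨q, hq, p, hp⟩ := hr
    have hq' : (0 : ℝ) < q := by exact_mod_cast hq
    refine ⟨1 / q, by positivity, Eventually.of_forall fun N => ?_⟩
    rw [Finset.filter_false_of_mem]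
    · simp; positivity
    · intro j _ hj
      have h1 := Int.fract_lt_one ((j : ℝ) * a)
      have e : Int.fract ((j : ℝ) * a) * q = ((j * p - q * ⌊(j : ℝ) * a⌋ : ℤ) : ℝ) := by
        rw [Int.fract]; push_cast; rw [← hp]; ring
      have h2 : Int.fract ((j : ℝ) * a) * q < q := by nlinarith
      have h3 : (q : ℝ) - 1 < Int.fract ((j : ℝ) * a) * q := by
        have := mul_lt_mul_of_pos_right hj hq'
        rwa [sub_mul, one_div, inv_mul_cancel₀ hq'.ne', one_mul] at this
      rw [e] at h2 h3
      have h2' : (j * p - q * ⌊(j : ℝ) * a⌋ : ℤ) < q := by exact_mod_cast h2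
      have h3' : (q : ℤ) - 1 < (j * p - q * ⌊(j : ℝ) * a⌋ : ℤ) := by exact_mod_cast h3
      omega
  · push Not at hr
    obtain ⟨K, hK⟩ := exists_nat_gt (2 / ε)
    have hK0 : (0 : ℝ) < K := lt_trans (by positivity) hK
    have hKn : 0 < K := by exact_mod_cast hK0
    have hδ : ∀ M : ℕ, ∃ δ : ℝ, 0 < δ ∧ ∀ k : ℕ, 0 < k → k < M →
        δ ≤ |(k : ℝ) * a - round ((k : ℝ) * a)| := by
      intro M
      induction M with
      | zero => exact ⟨1, one_pos, by intros; omega⟩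
      | succ M ih =>
        obtain ⟨δ, h0, h⟩ := ih
        by_cases hM : M = 0
        · exact ⟨1, one_pos, by intros; omega⟩
        refine ⟨min δ |(M : ℝ) * a - round ((M : ℝ) * a)|, lt_min h0 ?_, ?_⟩
        · exact abs_pos.2 (sub_ne_zero.2 (hr M (by omega) _))
        · intro k hk hkM
          rcases Nat.lt_succ_iff_lt_or_eq.1 hkM with h' | rfl
          · exact (min_le_left _ _).trans (h k hk h')
          · exact min_le_right _ _
    obtain ⟨δ, h0, h⟩ := hδ K
    refine ⟨δ, h0, ?_⟩
    have hlarge : ∀ᶠ N : ℕ in atTop, 2 / ε ≤ (N : ℝ) :=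
      tendsto_natCast_atTop_atTop.eventually_ge_atTop _
    filter_upwards [hlarge] with N hN
    have key : ∀ i j : ℕ, i < j → 1 - δ < Int.fract ((i : ℝ) * a) →
        1 - δ < Int.fract ((j : ℝ) * a) → i / K ≠ j / K := by
      intro i j hij hi hj he
      have hlt : j - i < K := by
        have h1 := Nat.div_add_mod i K
        have h2 := Nat.div_add_mod j K
        have h3 := Nat.mod_lt j hKn
        rw [he] at h1
        omega
      have h1 := h (j - i) (by omega) hlt
      have h2 := round_le (((j - i : ℕ) : ℝ) * a) (⌊(j : ℝ) * a⌋ - ⌊(i : ℝ) * a⌋)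
      have e : ((j - i : ℕ) : ℝ) * a - ((⌊(j : ℝ) * a⌋ - ⌊(i : ℝ) * a⌋ : ℤ) : ℝ)
          = Int.fract ((j : ℝ) * a) - Int.fract ((i : ℝ) * a) := by
        rw [Nat.cast_sub hij.le, Int.fract, Int.fract]; push_cast; ring
      rw [e] at h2
      have h3 : |Int.fract ((j : ℝ) * a) - Int.fract ((i : ℝ) * a)| < δ := by
        have := Int.fract_lt_one ((j : ℝ) * a)
        have := Int.fract_lt_one ((i : ℝ) * a)
        rw [abs_lt]; constructor <;> linarith
      linarith
    have hc : ((Finset.Icc 1 N).filter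
        (fun j : ℕ => 1 - δ < Int.fract ((j : ℝ) * a))).card ≤ (Finset.range (N / K + 1)).card := by
      refine Finset.card_le_card_of_injOn (fun j => j / K) ?_ ?_
      · intro j hj
        simp only [Finset.coe_filter, Finset.mem_Icc, Set.mem_ofPred_eq] at hj
        simp only [Finset.coe_range, Set.mem_Iio]
        exact Nat.lt_succ_of_le (Nat.div_le_div_right hj.1.2)
      · intro i hi j hj hij
        simp only [Finset.coe_filter, Finset.mem_Icc, Set.mem_ofPred_eq] at hi hj
        rcases lt_trichotomy i j with hl | hl | hl
        · exact absurd hij (key i j hl hi.2 hj.2)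
        · exact hl
        · exact absurd hij.symm (key j i hl hj.2 hi.2)
    rw [Finset.card_range] at hc
    have hc' : (((Finset.Icc 1 N).filter
        (fun j : ℕ => 1 - δ < Int.fract ((j : ℝ) * a))).card : ℝ) ≤ ((N / K : ℕ) : ℝ) + 1 := by
      exact_mod_cast hc
    have hd : ((N / K : ℕ) : ℝ) ≤ (N : ℝ) / K := Nat.cast_div_le
    have hd2 : (N : ℝ) / K ≤ ε / 2 * N := by
      rw [div_le_iff₀ hK0]
      have : 1 ≤ ε / 2 * K := by
        rw [div_lt_iff₀ hε] at hK; linarith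
      have hN0 : (0 : ℝ) ≤ N := Nat.cast_nonneg _
      nlinarith
    have : 1 ≤ ε / 2 * N := by
      rw [div_le_iff₀ hε] at hN; linarith
    linarith

instance : Fact ((0 : ℝ) < 1) := ⟨one_pos⟩

lemma hasMeanC_cont (a : ℝ) (w : ℕ → ℂ) (hw : ∀ j, ‖w j‖ ≤ 1)
    (h : ∀ n : ℤ, HasMeanC (fun j => fourier n (((j : ℝ) * a : ℝ) : AddCircle (1 : ℝ)) * w j))
    (g : C(AddCircle (1 : ℝ), ℂ)) :
    HasMeanC (fun j => g (((j : ℝ) * a : ℝ) : AddCircle (1 : ℝ)) * w j) := by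
  have hspan : ∀ p ∈ Submodule.span ℂ (Set.range (fourier (T := (1 : ℝ)))),
      HasMeanC (fun j => p (((j : ℝ) * a : ℝ) : AddCircle (1 : ℝ)) * w j) := by
    intro p hp
    induction hp using Submodule.span_induction with
    | mem x hx => obtain ⟨n, rfl⟩ := hx; exact h n
    | zero => exact ⟨0, by simp⟩
    | add x y _ _ hx hy => simpa [add_mul] using hx.add hy
    | smul c x _ hx => simpa [mul_assoc] using hx.const_mul c
  apply HasMeanC.of_approx
  intro ε hε
  have hg : g ∈ (Submodule.span ℂ (Set.range (fourier (T := (1 : ℝ))))).topologicalClosure := by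
    rw [span_fourier_closure_eq_top]; trivial
  rw [← SetLike.mem_coe, Submodule.topologicalClosure_coe] at hg
  obtain ⟨p, hp, hd⟩ := Metric.mem_closure_iff.1 hg ε hε
  refine ⟨_, hspan p hp, Eventually.of_forall fun N => ?_⟩
  have : ∀ j ∈ Finset.Icc 1 N, ‖g (((j : ℝ) * a : ℝ) : AddCircle (1 : ℝ)) * w j
      - p (((j : ℝ) * a : ℝ) : AddCircle (1 : ℝ)) * w j‖ ≤ ε := by
    intro j _
    rw [← sub_mul, norm_mul, ← dist_eq_norm]
    have h1 := ContinuousMap.dist_apply_le_dist (f := g) (g := p)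
      (((j : ℝ) * a : ℝ) : AddCircle (1 : ℝ))
    calc _ ≤ ε * 1 := mul_le_mul (h1.trans hd.le) (hw j) (norm_nonneg _) hε.le
      _ = ε := mul_one _
  refine (Finset.sum_le_card_nsmul _ _ _ this).trans ?_
  simp [mul_comm]

lemma exists_cont_approx (δ : ℝ) (hδ : 0 < δ) : ∃ g : C(AddCircle (1 : ℝ), ℂ), ∀ x : ℝ,
    ‖((Int.fract x : ℝ) : ℂ) - g (x : AddCircle (1 : ℝ))‖ ≤ if 1 - δ < Int.fract x then 1 else 0 := by
  let f : ℝ → ℂ := fun x => ((min x ((1 - x) / δ) : ℝ) : ℂ)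
  have hf : Continuous f := by fun_prop
  have h01 : f 0 = f 1 := by simp [f, hδ.le]
  refine ⟨⟨AddCircle.liftIco 1 0 f, AddCircle.liftIco_zero_continuous h01 hf.continuousOn⟩, ?_⟩
  intro x
  have hx : (x : AddCircle (1 : ℝ)) = (Int.fract x : ℝ) := by
    conv_lhs => rw [← Int.fract_add_floor x]
    rw [AddCircle.coe_add]
    have : ((⌊x⌋ : ℝ) : AddCircle (1 : ℝ)) = 0 := by
      rw [AddCircle.coe_eq_zero_iff]; exact ⟨⌊x⌋, by simp⟩
    rw [this, add_zero]
  have h0 := Int.fract_nonneg x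
  have h1 := Int.fract_lt_one x
  rw [ContinuousMap.coe_mk, hx, AddCircle.liftIco_coe_apply ⟨h0, by linarith⟩]
  simp only [f]
  rw [← Complex.ofReal_sub, Complex.norm_real, Real.norm_eq_abs]
  have hnn : 0 ≤ (1 - Int.fract x) / δ := div_nonneg (by linarith) hδ.le
  split_ifs with hc
  · have : 0 ≤ min (Int.fract x) ((1 - Int.fract x) / δ) := le_min h0 hnn
    have := min_le_left (Int.fract x) ((1 - Int.fract x) / δ)
    rw [abs_le]; constructor <;> linarith
  · rw [min_eq_left, sub_self, abs_zero]
    rw [le_div_iff₀ hδ]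
    nlinarith

lemma hasMeanC_fract (a : ℝ) (w : ℕ → ℂ) (hw : ∀ j, ‖w j‖ ≤ 1)
    (h : ∀ n : ℤ, HasMeanC (fun j => fourier n (((j : ℝ) * a : ℝ) : AddCircle (1 : ℝ)) * w j)) :
    HasMeanC (fun j => ((Int.fract ((j : ℝ) * a) : ℝ) : ℂ) * w j) := by
  apply HasMeanC.of_approx
  intro ε hε
  obtain ⟨δ, hδ, hc⟩ := count_small a ε hε
  obtain ⟨g, hg⟩ := exists_cont_approx δ hδ
  refine ⟨_, hasMeanC_cont a w hw h g, ?_⟩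
  filter_upwards [hc] with N hN
  refine le_trans ?_ hN
  rw [Finset.card_filter]
  push_cast
  refine Finset.sum_le_sum fun j _ => ?_
  rw [← sub_mul, norm_mul]
  refine (mul_le_of_le_one_right (norm_nonneg _) (hw j)).trans ?_
  exact hg _

lemma fourier_eq_pow (n : ℤ) (a : ℝ) (j : ℕ) :
    fourier n (((j : ℝ) * a : ℝ) : AddCircle (1 : ℝ))
      = (fourier n ((a : ℝ) : AddCircle (1 : ℝ))) ^ j := by
  rw [fourier_coe_apply, fourier_coe_apply, ← Complex.exp_nat_mul]
  congr 1
  push_cast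
  ring

lemma norm_fourier_apply (n : ℤ) (x : AddCircle (1 : ℝ)) : ‖fourier n x‖ = 1 := by
  rw [fourier_apply]; exact Circle.norm_coe _

lemma hasMeanC_fract_mul (a b : ℝ) :
    HasMeanC (fun j => ((Int.fract ((j : ℝ) * a) : ℝ) : ℂ) * ((Int.fract ((j : ℝ) * b) : ℝ) : ℂ)) := by
  refine hasMeanC_fract a (fun j => ((Int.fract ((j : ℝ) * b) : ℝ) : ℂ)) ?_ ?_
  · intro j
    rw [Complex.norm_real, Real.norm_eq_abs, abs_of_nonneg (Int.fract_nonneg _)]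
    exact (Int.fract_lt_one _).le
  · intro n
    have := hasMeanC_fract b
      (fun j => fourier n (((j : ℝ) * a : ℝ) : AddCircle (1 : ℝ)))
      (fun j => (norm_fourier_apply _ _).le) ?_
    · simpa only [mul_comm] using this
    · intro m
      simp only [fourier_eq_pow, ← mul_pow]
      apply hasMeanC_pow
      rw [norm_mul, norm_fourier_apply, norm_fourier_apply, one_mul]

/-- For all real numbers `s, t, u, v`, the limit
`c(s,t,u,v) = lim_{N→∞} (1/N) ∑_{j=1}^N ({js} − {jt})({ju} − {jv})` exists and is finite. -/
theorem stmt_0 (s t u v : ℝ) :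
    ∃ L : ℝ, Tendsto
      (fun N : ℕ => (1 / (N : ℝ)) *
        ∑ j ∈ Finset.Icc 1 N,
          (Int.fract ((j : ℝ) * s) - Int.fract ((j : ℝ) * t)) *
          (Int.fract ((j : ℝ) * u) - Int.fract ((j : ℝ) * v)))
      atTop (nhds L) := by
  obtain ⟨L, hL⟩ := (((hasMeanC_fract_mul s u).add ((hasMeanC_fract_mul s v).const_mul (-1))).add
    ((hasMeanC_fract_mul t u).const_mul (-1))).add (hasMeanC_fract_mul t v)
  refine ⟨L.re, ((Complex.continuous_re.tendsto L).comp hL).congr fun N => ?_⟩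
  rw [Function.comp_apply, ← Complex.ofReal_re ((1 / (N : ℝ)) * _)]
  congr 1
  push_cast
  congr 1
  refine Finset.sum_congr rfl fun j _ => ?_
  ring
end

section
/- For all real numbers s, t, u, v, the limit c̃(s,t,u,v) := lim_{N→∞} (1/(2N)) ∑_{j=1}^N (h_j(t−u) + h_j(s−v) − h_j(s−u) − h_j(t−v)) exists and is finite, where h_j(x) := {jx}(1 − {jx}); that is, there exists a real number L such that the sequence tends to L as N → ∞. -/
open Filter Finset

lemma avg_cos (θ : ℝ) : ∃ L : ℝ, Tendsto (fun N : ℕ => (1 / (N : ℝ)) *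
    ∑ j ∈ Finset.Icc 1 N, Real.cos ((j : ℝ) * θ)) atTop (nhds L) := by
  by_cases h : Real.sin (θ / 2) = 0
  · obtain ⟨m, hm⟩ := Real.sin_eq_zero_iff.mp h
    refine ⟨1, tendsto_const_nhds.congr' ?_⟩
    filter_upwards [eventually_gt_atTop 0] with N hN
    have h1 : ∀ j ∈ Finset.Icc 1 N, Real.cos ((j : ℝ) * θ) = 1 := by
      intro j _
      have : (j : ℝ) * θ = ((j * m : ℤ) : ℝ) * (2 * Real.pi) := by
        push_cast
        linear_combination (-2 * (j : ℝ)) * hm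
      rw [this, Real.cos_int_mul_two_pi]
    rw [Finset.sum_congr rfl h1]
    have : (N : ℝ) ≠ 0 := by positivity
    simp [this]
  · refine ⟨0, ?_⟩
    have key : ∀ N : ℕ, ∑ j ∈ Finset.Icc 1 N, Real.cos ((j : ℝ) * θ)
        = (Real.sin (N * θ + θ / 2) - Real.sin (θ / 2)) / (2 * Real.sin (θ / 2)) := by
      intro N
      induction N with
      | zero => simp
      | succ n ih =>
        rw [Finset.sum_Icc_succ_top (by omega), ih]
        have e1 : (n : ℝ) * θ + θ / 2 = ((n + 1 : ℕ) : ℝ) * θ - θ / 2 := by push_cast; ring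
        rw [e1, Real.sin_sub, Real.sin_add]
        field_simp
        ring
    have h0 : Tendsto (fun N : ℕ => (1 / |Real.sin (θ / 2)|) * (1 / (N : ℝ))) atTop (nhds 0) := by
      simpa using (tendsto_one_div_atTop_nhds_zero_nat (𝕜 := ℝ)).const_mul (1 / |Real.sin (θ / 2)|)
    refine squeeze_zero_norm (fun N => ?_) h0
    rw [key, Real.norm_eq_abs, abs_mul, abs_of_nonneg (by positivity : (0:ℝ) ≤ 1 / N),
      mul_comm, abs_div, abs_mul]
    refine mul_le_mul_of_nonneg_right ?_ (by positivity)
    have hp : 0 < |Real.sin (θ / 2)| := abs_pos.mpr h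
    rw [div_le_div_iff₀ (by positivity) hp, abs_two]
    have : |Real.sin (N * θ + θ / 2) - Real.sin (θ / 2)| ≤ 2 := by
      rw [abs_le]
      constructor <;> linarith [Real.sin_le_one (N * θ + θ / 2), Real.neg_one_le_sin (N * θ + θ / 2),
        Real.sin_le_one (θ / 2), Real.neg_one_le_sin (θ / 2)]
    nlinarith

lemma h_fourier (y : ℝ) : HasSum (fun k : ℕ => 1 / (k : ℝ) ^ 2 * Real.cos (2 * Real.pi * k * y))
    (Real.pi ^ 2 * (1 / 6 - Int.fract y * (1 - Int.fract y))) := by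
  have := hasSum_one_div_nat_pow_mul_cos (k := 1) one_ne_zero
    (x := Int.fract y) ⟨Int.fract_nonneg y, (Int.fract_lt_one y).le⟩
  convert this using 1
  · funext k
    congr 1
    have : 2 * Real.pi * k * y = 2 * Real.pi * k * Int.fract y + ((k * ⌊y⌋ : ℤ) : ℝ) * (2 * Real.pi) := by
      push_cast
      rw [← Int.self_sub_floor]; ring
    rw [this, Real.cos_add_int_mul_two_pi]
  · have hb : (Polynomial.map (algebraMap ℚ ℝ) (Polynomial.bernoulli (2 * 1))).eval (Int.fract y)
        = Int.fract y ^ 2 - Int.fract y + 1 / 6 := by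
      have hb2 : bernoulli 2 = 1 / 6 := by
        rw [bernoulli_eq_bernoulli'_of_ne_one (by norm_num), bernoulli'_two]
      simp [Polynomial.bernoulli, Finset.sum_range_succ, hb2, bernoulli_one,
        Polynomial.eval_monomial]
      ring
    rw [hb]
    norm_num [Nat.factorial]
    ring

lemma avg_h (x : ℝ) : ∃ L : ℝ, Tendsto (fun N : ℕ => (1 / (N : ℝ)) *
    ∑ j ∈ Finset.Icc 1 N, Int.fract ((j : ℝ) * x) * (1 - Int.fract ((j : ℝ) * x)))
    atTop (nhds L) := by
  choose c hc using fun k : ℕ => avg_cos (2 * Real.pi * k * x)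
  have hd := tendsto_tsum_of_dominated_convergence (𝓕 := atTop)
    (f := fun (N : ℕ) (k : ℕ) => 1 / (k : ℝ) ^ 2 * ((1 / (N : ℝ)) *
      ∑ j ∈ Finset.Icc 1 N, Real.cos ((j : ℝ) * (2 * Real.pi * k * x))))
    (g := fun k => 1 / (k : ℝ) ^ 2 * c k)
    (bound := fun k : ℕ => 1 / (k : ℝ) ^ 2) hasSum_zeta_two.summable
    (fun k => (hc k).const_mul _)
    (by
      refine Eventually.of_forall fun N k => ?_
      rw [norm_mul, Real.norm_of_nonneg (by positivity)]
      refine mul_le_of_le_one_right (by positivity) ?_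
      rw [norm_mul, Real.norm_of_nonneg (by positivity)]
      have : ‖∑ j ∈ Finset.Icc 1 N, Real.cos ((j : ℝ) * (2 * Real.pi * k * x))‖ ≤ N := by
        refine (norm_sum_le_of_le _ (n := fun _ => (1 : ℝ)) fun j _ => Real.abs_cos_le_one _).trans ?_
        simp
      rw [one_div_mul_eq_div]
      exact div_le_one_of_le₀ this (by positivity))
  refine ⟨_, ((tendsto_const_nhds (x := (1 / 6 : ℝ))).sub (hd.div_const (Real.pi ^ 2))).congr' ?_⟩
  filter_upwards [eventually_gt_atTop 0] with N hN
  have hs : HasSum (fun k : ℕ => 1 / (k : ℝ) ^ 2 * ((1 / (N : ℝ)) *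
      ∑ j ∈ Finset.Icc 1 N, Real.cos ((j : ℝ) * (2 * Real.pi * k * x))))
      ((1 / (N : ℝ)) * ∑ j ∈ Finset.Icc 1 N,
        (Real.pi ^ 2 * (1 / 6 - Int.fract (j * x) * (1 - Int.fract (j * x))))) := by
    have := (hasSum_sum (s := Finset.Icc 1 N) fun j _ => h_fourier ((j : ℝ) * x)).mul_left (1 / (N : ℝ))
    refine Eq.subst (motive := fun f => HasSum f _) (funext fun k => ?_) this
    symm
    rw [mul_left_comm, Finset.mul_sum]
    congr 1
    refine Finset.sum_congr rfl fun j _ => ?_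
    congr 2
    ring
  rw [hs.tsum_eq, ← Finset.mul_sum, Finset.sum_sub_distrib]
  have : (N : ℝ) ≠ 0 := by positivity
  have := Real.pi_ne_zero
  simp only [Finset.sum_const, Nat.card_Icc, nsmul_eq_mul, Nat.add_sub_cancel]
  generalize ∑ j ∈ Finset.Icc 1 N, Int.fract ((j : ℝ) * x) * (1 - Int.fract ((j : ℝ) * x)) = S
  field_simp
  ring



/-- For all real `s, t, u, v`, the limit
`c̃(s,t,u,v) = lim_{N→∞} (1/(2N)) ∑_{j=1}^N (h_j(t−u) + h_j(s−v) − h_j(s−u) − h_j(t−v))`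
exists and is finite, where `h_j(x) = {jx}(1 − {jx})`. -/
theorem stmt_1 (s t u v : ℝ) :
    ∃ L : ℝ, Tendsto
      (fun N : ℕ =>
        (1 / (2 * (N : ℝ))) *
          ∑ j ∈ Finset.Icc 1 N,
            ((fun x : ℝ => Int.fract ((j : ℝ) * x) * (1 - Int.fract ((j : ℝ) * x))) (t - u)
            + (fun x : ℝ => Int.fract ((j : ℝ) * x) * (1 - Int.fract ((j : ℝ) * x))) (s - v)
            - (fun x : ℝ => Int.fract ((j : ℝ) * x) * (1 - Int.fract ((j : ℝ) * x))) (s - u)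
            - (fun x : ℝ => Int.fract ((j : ℝ) * x) * (1 - Int.fract ((j : ℝ) * x))) (t - v)))
      atTop (nhds L) := by
  obtain ⟨a, ha⟩ := avg_h (t - u)
  obtain ⟨b, hb⟩ := avg_h (s - v)
  obtain ⟨c, hc⟩ := avg_h (s - u)
  obtain ⟨d, hd⟩ := avg_h (t - v)
  refine ⟨_, ((((ha.add hb).sub hc).sub hd).const_mul (1 / 2)).congr fun N => ?_⟩
  simp only [Finset.sum_sub_distrib, Finset.sum_add_distrib]
  rw [one_div_mul_eq_div, one_div_mul_eq_div, one_div_mul_eq_div, one_div_mul_eq_div]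
  ring
end

section
/- Let θ > 0 and let (w_j)_{j≥1} be a sequence of non-negative real numbers. Suppose that (1/n) ∑_{j=1}^n Ψ_n(j) w_j converges to a real number L > 0 as n → ∞. Then (1/log n) ∑_{j=1}^n (Ψ_n(j)/j) w_j converges to Lθ as n → ∞. -/
open Filter Finset

/-- `Ψ_n(j) = ∏_{i=0}^{j−1} (n−i)/(θ+n−1−i)`. -/
noncomputable def Psi (θ : ℝ) (n j : ℕ) : ℝ :=
  ∏ i ∈ Finset.range j, ((n : ℝ) - i) / (θ + (n : ℝ) - 1 - i)

lemma Psi_ratio (θ : ℝ) (hθ : 0 < θ) (n j : ℕ) (h : j ≤ n) :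
    Psi θ (n+1) j * ((n + 1 - j) * (θ + n)) = Psi θ n j * ((θ + n - j) * (n + 1)) := by
  induction j with
  | zero => simp [Psi]; ring
  | succ j ih =>
    have ih := ih (by omega)
    have hj : (j : ℝ) + 1 ≤ n := by exact_mod_cast h
    have e1 : Psi θ (n+1) (j+1) = Psi θ (n+1) j * (((n : ℝ) + 1 - j) / (θ + n - j)) := by
      unfold Psi
      rw [Finset.prod_range_succ]
      push_cast
      congr 2
      ring
    have e2 : Psi θ n (j+1) = Psi θ n j * (((n : ℝ) - j) / (θ + n - 1 - j)) := by
      unfold Psi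
      rw [Finset.prod_range_succ]
    have h1 : θ + n - j ≠ 0 := by linarith
    have h2 : θ + n - 1 - j ≠ 0 := by linarith
    have h3 : θ + n - (j + 1) = θ + n - 1 - j := by ring
    rw [e1, e2]
    push_cast
    rw [h3]
    field_simp
    linear_combination ((n:ℝ) - j) * ih

lemma Psi_step (θ : ℝ) (hθ : 0 < θ) (n j : ℕ) (h1 : 1 ≤ j) (h : j ≤ n) :
    Psi θ (n+1) j / j = Psi θ n j / j + Psi θ (n+1) j / (n + 1) - Psi θ n j / (θ + n) := by
  have := Psi_ratio θ hθ n j h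
  have hj : (1 : ℝ) ≤ j := by exact_mod_cast h1
  have hn : (0 : ℝ) ≤ n := by positivity
  have : (j : ℝ) ≠ 0 := by linarith
  have : θ + n ≠ 0 := by linarith
  have : (n : ℝ) + 1 ≠ 0 := by linarith
  field_simp
  linarith

lemma main_identity (θ : ℝ) (hθ : 0 < θ) (w : ℕ → ℝ) (n : ℕ) :
    ∑ j ∈ Finset.Icc 1 n, Psi θ n j / (j : ℝ) * w j =
      (1 / (n : ℝ)) * ∑ j ∈ Finset.Icc 1 n, Psi θ n j * w j +
      ∑ k ∈ Finset.range n, ((1 / (k : ℝ)) * ∑ j ∈ Finset.Icc 1 k, Psi θ k j * w j)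
        * (θ / (θ + k)) := by
  induction n with
  | zero => simp
  | succ n ih =>
    rw [Finset.sum_range_succ, Finset.sum_Icc_succ_top (by omega),
      Finset.sum_Icc_succ_top (by omega)]
    have e : ∑ j ∈ Finset.Icc 1 n, Psi θ (n+1) j / (j : ℝ) * w j =
        ∑ j ∈ Finset.Icc 1 n, Psi θ n j / (j : ℝ) * w j
        + (1 / ((n : ℝ) + 1)) * ∑ j ∈ Finset.Icc 1 n, Psi θ (n+1) j * w j
        - (1 / (θ + n)) * ∑ j ∈ Finset.Icc 1 n, Psi θ n j * w j := by
      rw [Finset.mul_sum, Finset.mul_sum, ← Finset.sum_add_distrib, ← Finset.sum_sub_distrib]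
      refine Finset.sum_congr rfl fun j hj => ?_
      rw [Finset.mem_Icc] at hj
      rw [Psi_step θ hθ n j hj.1 hj.2]
      ring
    rw [e, ih]
    rcases Nat.eq_zero_or_pos n with rfl | hn
    · simp
    have hn' : (0 : ℝ) < n := by exact_mod_cast hn
    have h1 : θ + n ≠ 0 := by linarith
    push_cast
    generalize ∑ k ∈ Finset.range n, ((1 / (k : ℝ)) * ∑ j ∈ Finset.Icc 1 k, Psi θ k j * w j)
        * (θ / (θ + k)) = S
    field_simp
    ring

open Asymptotics in
lemma asymp (θ : ℝ) (hθ : 0 < θ) (L : ℝ) (a : ℕ → ℝ) (ha : Tendsto a atTop (nhds L)) :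
    Tendsto (fun n : ℕ => (1 / Real.log n) * (a n + ∑ k ∈ Finset.range n, a k * (θ / (θ + k))))
      atTop (nhds (L * θ)) := by
  have hlog : Tendsto (fun n : ℕ => Real.log n) atTop atTop :=
    Real.tendsto_log_atTop.comp tendsto_natCast_atTop_atTop
  have hinv : Tendsto (fun n : ℕ => 1 / Real.log n) atTop (nhds 0) := by
    simp_rw [one_div]
    exact hlog.inv_tendsto_atTop
  have hH : ∀ n : ℕ, ∑ k ∈ Finset.range n, (1 / ((k : ℝ) + 1)) = (harmonic n : ℝ) := by
    intro n; simp [harmonic]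
  have hHlog : Tendsto (fun n : ℕ => (1 / Real.log n) * (harmonic n : ℝ)) atTop (nhds 1) := by
    have h := (hinv.mul Real.tendsto_harmonic_sub_log).add_const 1
    rw [zero_mul, zero_add] at h
    refine h.congr' ?_
    filter_upwards [hlog.eventually_gt_atTop 0] with n hn
    field_simp
    ring
  have hHtop : Tendsto (fun n : ℕ => ∑ k ∈ Finset.range n, (1 / ((k : ℝ) + 1))) atTop atTop :=
    Real.tendsto_sum_range_one_div_nat_succ_atTop
  have hratio : Tendsto (fun k : ℕ => ((k : ℝ) + 1) / (θ + k)) atTop (nhds 1) := by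
    have h0 : Tendsto (fun k : ℕ => θ + (k : ℝ)) atTop atTop :=
      tendsto_atTop_add_const_left _ _ tendsto_natCast_atTop_atTop
    have h := (h0.inv_tendsto_atTop.const_mul (1 - θ)).add_const 1
    rw [mul_zero, zero_add] at h
    refine h.congr fun k => ?_
    have : θ + (k : ℝ) ≠ 0 := by positivity
    simp only [Pi.inv_apply]
    field_simp
    ring
  have ho : (fun k : ℕ => a k * (θ / (θ + k)) - L * θ * (1 / ((k : ℝ) + 1)))
      =o[atTop] (fun k : ℕ => 1 / ((k : ℝ) + 1)) := by
    rw [Asymptotics.isLittleO_iff_tendsto']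
    · have h := ((ha.mul hratio).const_mul θ).sub_const (L * θ)
      rw [show θ * (L * 1) - L * θ = 0 by ring] at h
      refine h.congr fun k => ?_
      have : θ + (k : ℝ) ≠ 0 := by positivity
      have : (k : ℝ) + 1 ≠ 0 := by positivity
      field_simp
    · refine Eventually.of_forall fun k hk => ?_
      have : 1 / ((k : ℝ) + 1) ≠ 0 := by positivity
      exact absurd hk this
  have hs := ho.sum_range (fun k => by positivity) hHtop
  have hs2 := hs.tendsto_div_nhds_zero
  simp_rw [hH] at hs2
  have h := ((hinv.mul ha).add (hs2.mul hHlog)).add (hHlog.const_mul (L * θ))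
  rw [show 0 * L + 0 * 1 + L * θ * 1 = L * θ by ring] at h
  refine h.congr' ?_
  filter_upwards [eventually_gt_atTop 0] with n hn
  have hp : (harmonic n : ℝ) ≠ 0 := by
    exact_mod_cast (harmonic_pos hn.ne').ne'
  rw [Finset.sum_sub_distrib, ← Finset.mul_sum, hH]
  generalize ∑ k ∈ Finset.range n, a k * (θ / (θ + k)) = S
  field_simp
  ring

/-- If `(1/n) ∑_{j=1}^n Ψ_n(j) w_j → L > 0`, then
`(1/log n) ∑_{j=1}^n (Ψ_n(j)/j) w_j → Lθ`. -/
theorem stmt_2 (θ : ℝ) (hθ : 0 < θ) (w : ℕ → ℝ) (hw : ∀ j, 0 ≤ w j) (L : ℝ) (hL : 0 < L)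
    (hconv : Tendsto
      (fun n : ℕ => (1 / (n : ℝ)) * ∑ j ∈ Finset.Icc 1 n, Psi θ n j * w j)
      atTop (nhds L)) :
    Tendsto
      (fun n : ℕ => (1 / Real.log n) * ∑ j ∈ Finset.Icc 1 n, Psi θ n j / (j : ℝ) * w j)
      atTop (nhds (L * θ)) := by
  simp_rw [main_identity θ hθ w]
  exact asymp θ hθ L _ hconv
end

section
/- Let θ > 0. For every integer n ≥ 1, (1/n) ∑_{j=1}^n Ψ_n(j) = 1/θ. -/
open Finset

theorem Psi_partial (θ : ℝ) (hθ : 0 < θ) (n m : ℕ) (hm : m ≤ n) :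
    θ * ∑ j ∈ Finset.Icc 1 m, Psi θ n j = n - ((n : ℝ) - m) * Psi θ n m := by
  induction m with
  | zero => simp [Psi]
  | succ m ih =>
    have h1 : (m : ℝ) + 1 ≤ n := by exact_mod_cast hm
    have hpos : θ + (n : ℝ) - 1 - m ≠ 0 := by
      have : 0 < θ + (n : ℝ) - 1 - m := by linarith
      exact this.ne'
    have hs : (θ + (n : ℝ) - 1 - m) * Psi θ n (m + 1) = ((n : ℝ) - m) * Psi θ n m := by
      unfold Psi
      rw [Finset.prod_range_succ]
      field_simp
    rw [Finset.sum_Icc_succ_top (by omega), mul_add, ih (by omega)]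
    push_cast
    linarith

/-- For every `n ≥ 1`, `(1/n) ∑_{j=1}^n Ψ_n(j) = 1/θ`. -/
theorem stmt_3 (θ : ℝ) (hθ : 0 < θ) (n : ℕ) (hn : 1 ≤ n) :
    (1 / (n : ℝ)) * ∑ j ∈ Finset.Icc 1 n, Psi θ n j = 1 / θ := by
  have h := Psi_partial θ hθ n n le_rfl
  have hn' : (n : ℝ) ≠ 0 := by
    have : n ≠ 0 := by omega
    exact_mod_cast this
  have hθ' := hθ.ne'
  rw [sub_self, zero_mul, sub_zero] at h
  field_simp
  linarith
end

section
/- Let θ > 0. For every integer n ≥ 1, ∑_{j=1}^n Ψ_n(j)/j = ∑_{j=1}^n 1/(θ + j − 1). -/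
open Finset

theorem Psi_succ_aux (θ : ℝ) (n k : ℕ) :
    Psi θ (n+1) (k+1) = ((n:ℝ)+1) / (θ + n) * Psi θ n k := by
  unfold Psi
  rw [Finset.prod_range_succ', mul_comm]
  congr 1
  · push_cast
    congr 1 <;> ring
  · apply Finset.prod_congr rfl
    intro i _
    push_cast
    congr 1 <;> ring

theorem Psi_diff_aux (θ : ℝ) (hθ : 0 < θ) (n m : ℕ) (hm : m ≤ n) :
    ∑ j ∈ Finset.Icc 1 m, Psi θ (n+1) j / (j : ℝ)
      = ∑ j ∈ Finset.Icc 1 m, Psi θ n j / (j : ℝ) + (1 - Psi θ n m) / (θ + n) := by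
  induction m with
  | zero => simp [Psi]
  | succ k ih =>
    rw [Finset.sum_Icc_succ_top (by omega), Finset.sum_Icc_succ_top (by omega), ih (by omega),
      Psi_succ_aux]
    have h : Psi θ n (k+1) = Psi θ n k * (((n : ℝ) - k) / (θ + (n : ℝ) - 1 - k)) := by
      unfold Psi
      rw [Finset.prod_range_succ]
    rw [h]
    have hk : ((k:ℝ) + 1) ≤ n := by exact_mod_cast hm
    have hk0 : (0:ℝ) ≤ k := Nat.cast_nonneg k
    have h1 : θ + (n : ℝ) - 1 - k ≠ 0 := by
      have : 0 < θ + (n : ℝ) - 1 - k := by linarith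
      exact this.ne'
    have h2 : θ + (n : ℝ) ≠ 0 := by
      have : 0 < θ + (n : ℝ) := by linarith
      exact this.ne'
    have h3 : (k : ℝ) + 1 ≠ 0 := by positivity
    push_cast
    field_simp
    ring

theorem Psi_sum_aux (θ : ℝ) (hθ : 0 < θ) (n : ℕ) :
    ∑ j ∈ Finset.Icc 1 n, Psi θ n j / (j : ℝ)
      = ∑ j ∈ Finset.Icc 1 n, 1 / (θ + (j : ℝ) - 1) := by
  induction n with
  | zero => simp
  | succ n ih =>
    rw [Finset.sum_Icc_succ_top (by omega), Finset.sum_Icc_succ_top (by omega),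
      Psi_diff_aux θ hθ n n le_rfl, ih, Psi_succ_aux]
    have h2 : θ + (n : ℝ) ≠ 0 := by positivity
    have h3 : (n : ℝ) + 1 ≠ 0 := by positivity
    have h4 : θ + ((n : ℝ) + 1) - 1 = θ + n := by ring
    push_cast
    rw [h4]
    field_simp
    ring

/-- For every `n ≥ 1`, `∑_{j=1}^n Ψ_n(j)/j = ∑_{j=1}^n 1/(θ+j−1)`. -/
theorem stmt_4 (θ : ℝ) (hθ : 0 < θ) (n : ℕ) (hn : 1 ≤ n) :
    ∑ j ∈ Finset.Icc 1 n, Psi θ n j / (j : ℝ)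
      = ∑ j ∈ Finset.Icc 1 n, 1 / (θ + (j : ℝ) - 1) := by
  exact Psi_sum_aux θ hθ n
end

section
/- Let θ > 0. For every integer n ≥ 1, ∑_{1≤j,k≤n} (1/(jk)) (Ψ_n(j)Ψ_n(k) − Ψ_n(j+k)·1_{j+k≤n}) = ∑_{k=0}^{n−1} 1/(θ+k)², where 1_{j+k≤n} equals 1 if j+k ≤ n and 0 otherwise. -/
open Finset

lemma Psi_zero_of_lt (θ : ℝ) {n j : ℕ} (h : n < j) : Psi θ n j = 0 := by
  unfold Psi
  apply Finset.prod_eq_zero (Finset.mem_range.2 h)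
  simp

lemma Psi_shift (θ : ℝ) (n j : ℕ) :
    Psi θ (n + 1) (j + 1) = ((n : ℝ) + 1) / (θ + n) * Psi θ n j := by
  unfold Psi
  rw [Finset.prod_range_succ', mul_comm]
  congr 1
  · push_cast
    congr 1 <;> ring
  · apply Finset.prod_congr rfl
    intro i _
    push_cast
    congr 1 <;> ring

lemma Psi_rec (θ : ℝ) (hθ : 0 < θ) (n j : ℕ) :
    Psi θ (n + 1) (j + 1) = Psi θ n (j + 1)
      + ((j : ℝ) + 1) * ((Psi θ n j - Psi θ n (j + 1)) / (θ + n)) := by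
  have h0 : θ + (n : ℝ) ≠ 0 := by positivity
  rw [Psi_shift]
  rcases lt_trichotomy j n with h | h | h
  · have h1 : Psi θ n (j + 1) = Psi θ n j * (((n : ℝ) - j) / (θ + (n : ℝ) - 1 - j)) := by
      unfold Psi
      rw [Finset.prod_range_succ]
    have h2 : (j : ℝ) + 1 ≤ n := by exact_mod_cast h
    have h3 : θ + (n : ℝ) - 1 - j ≠ 0 := by
      have : 0 < θ + (n : ℝ) - 1 - j := by linarith
      exact this.ne'
    rw [h1]
    field_simp
    ring
  · subst h
    rw [Psi_zero_of_lt θ (Nat.lt_succ_self j)]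
    ring
  · rw [Psi_zero_of_lt θ h, Psi_zero_of_lt θ (Nat.lt_succ_of_lt h)]
    ring

lemma sum_one (θ : ℝ) (hθ : 0 < θ) (M n : ℕ) (h : n ≤ M) :
    ∑ j ∈ range M, Psi θ n (j + 1) / ((j : ℝ) + 1) = ∑ k ∈ range n, 1 / (θ + (k : ℝ)) := by
  induction n with
  | zero =>
    simp only [Finset.range_zero, Finset.sum_empty]
    apply Finset.sum_eq_zero
    intro j _
    rw [Psi_zero_of_lt θ (Nat.succ_pos j), zero_div]
  | succ n ih =>
    rw [Finset.sum_range_succ, ← ih (by omega)]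
    have : ∀ j ∈ range M, Psi θ (n + 1) (j + 1) / ((j : ℝ) + 1)
        = Psi θ n (j + 1) / ((j : ℝ) + 1) + (Psi θ n j - Psi θ n (j + 1)) / (θ + n) := by
      intro j _
      rw [Psi_rec θ hθ]
      have : (j : ℝ) + 1 ≠ 0 := by positivity
      rw [add_div, mul_div_cancel_left₀ _ this]
    rw [Finset.sum_congr rfl this, Finset.sum_add_distrib, ← Finset.sum_div,
      Finset.sum_range_sub', Psi_zero_of_lt θ (show n < M by omega)]
    simp [Psi]

lemma sum_two (θ : ℝ) (hθ : 0 < θ) (M n : ℕ) (h : n ≤ M) :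
    ∑ j ∈ range M, ∑ k ∈ range M,
      Psi θ n (j + k + 1 + 1) / (((j : ℝ) + 1) * ((k : ℝ) + 1))
      = (∑ k ∈ range n, 1 / (θ + (k : ℝ))) ^ 2 - ∑ k ∈ range n, 1 / (θ + (k : ℝ)) ^ 2 := by
  induction n with
  | zero =>
    simp only [Finset.range_zero, Finset.sum_empty]
    norm_num
    apply Finset.sum_eq_zero
    intro j _
    apply Finset.sum_eq_zero
    intro k _
    rw [Psi_zero_of_lt θ (Nat.succ_pos _), zero_div]
  | succ n ih =>
    have hs := sum_one θ hθ M n (by omega)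
    have ih := ih (by omega)
    rw [Finset.sum_range_succ, Finset.sum_range_succ]
    have e : ∀ j ∈ range M, ∀ k ∈ range M,
        Psi θ (n + 1) (j + k + 1 + 1) / (((j : ℝ) + 1) * ((k : ℝ) + 1))
        = Psi θ n (j + k + 1 + 1) / (((j : ℝ) + 1) * ((k : ℝ) + 1))
          + ((Psi θ n (j + k + 1) - Psi θ n (j + (k + 1) + 1)) / (((j : ℝ) + 1) * (θ + n))
          + (Psi θ n (k + j + 1) - Psi θ n (k + (j + 1) + 1)) / (((k : ℝ) + 1) * (θ + n))) := by
      intro j _ k _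
      rw [Psi_rec θ hθ, show j + (k + 1) + 1 = j + k + 1 + 1 by ring,
        show k + (j + 1) + 1 = j + k + 1 + 1 by ring, show k + j + 1 = j + k + 1 by ring]
      have h1 : (j : ℝ) + 1 ≠ 0 := by positivity
      have h2 : (k : ℝ) + 1 ≠ 0 := by positivity
      have h0 : θ + (n : ℝ) ≠ 0 := by positivity
      push_cast
      field_simp
      ring
    have t : ∑ j ∈ range M, ∑ k ∈ range M,
        (Psi θ n (j + k + 1) - Psi θ n (j + (k + 1) + 1)) / (((j : ℝ) + 1) * (θ + n))
        = (∑ k ∈ range n, 1 / (θ + (k : ℝ))) / (θ + n) := by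
      rw [← hs, Finset.sum_div]
      apply Finset.sum_congr rfl
      intro j _
      rw [← Finset.sum_div, Finset.sum_range_sub' (fun k => Psi θ n (j + k + 1)),
        Psi_zero_of_lt θ (show n < j + M + 1 by omega), div_div]
      simp
    have t2 : ∑ j ∈ range M, ∑ k ∈ range M,
        (Psi θ n (k + j + 1) - Psi θ n (k + (j + 1) + 1)) / (((k : ℝ) + 1) * (θ + n))
        = (∑ k ∈ range n, 1 / (θ + (k : ℝ))) / (θ + n) := by
      rw [Finset.sum_comm, t]
    rw [Finset.sum_congr rfl (fun j hj => Finset.sum_congr rfl (e j hj))]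
    simp only [Finset.sum_add_distrib]
    rw [t, t2, ih]
    have h0 : θ + (n : ℝ) ≠ 0 := by positivity
    field_simp
    ring

/-- For every `n ≥ 1`,
`∑_{1≤j,k≤n} (1/(jk)) (Ψ_n(j)Ψ_n(k) − Ψ_n(j+k)·1_{j+k≤n}) = ∑_{k=0}^{n−1} 1/(θ+k)²`. -/
theorem stmt_5 (θ : ℝ) (hθ : 0 < θ) (n : ℕ) (hn : 1 ≤ n) :
    ∑ j ∈ Finset.Icc 1 n, ∑ k ∈ Finset.Icc 1 n,
        (1 / ((j : ℝ) * (k : ℝ))) *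
          (Psi θ n j * Psi θ n k - (if j + k ≤ n then Psi θ n (j + k) else 0))
      = ∑ k ∈ Finset.range n, 1 / (θ + (k : ℝ)) ^ 2 := by
  have hI : ∀ f : ℕ → ℝ, ∑ j ∈ Finset.Icc 1 n, f j = ∑ j ∈ range n, f (j + 1) := by
    intro f
    rw [Finset.range_eq_Ico, Finset.sum_Ico_add' f 0 n 1]
    rfl
  simp only [hI]
  have e : ∀ j ∈ range n, ∀ k ∈ range n,
      (1 / (((j + 1 : ℕ) : ℝ) * ((k + 1 : ℕ) : ℝ))) *
          (Psi θ n (j + 1) * Psi θ n (k + 1)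
            - (if j + 1 + (k + 1) ≤ n then Psi θ n (j + 1 + (k + 1)) else 0))
      = (Psi θ n (j + 1) / ((j : ℝ) + 1)) * (Psi θ n (k + 1) / ((k : ℝ) + 1))
        - Psi θ n (j + k + 1 + 1) / (((j : ℝ) + 1) * ((k : ℝ) + 1)) := by
    intro j _ k _
    have h : (if j + 1 + (k + 1) ≤ n then Psi θ n (j + 1 + (k + 1)) else 0)
        = Psi θ n (j + k + 1 + 1) := by
      rw [show j + 1 + (k + 1) = j + k + 1 + 1 by ring]
      split_ifs with h
      · rfl
      · rw [Psi_zero_of_lt θ (by omega)]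
    rw [h]
    have h1 : (j : ℝ) + 1 ≠ 0 := by positivity
    have h2 : (k : ℝ) + 1 ≠ 0 := by positivity
    push_cast
    field_simp
  rw [Finset.sum_congr rfl (fun j hj => Finset.sum_congr rfl (e j hj))]
  simp only [Finset.sum_sub_distrib]
  rw [← Finset.sum_mul_sum, sum_one θ hθ n n le_rfl, sum_two θ hθ n n le_rfl]
  ring
end

section
/- Let θ > 0. There exists a constant C (depending only on θ) such that for all integers n ≥ 1, ∑_{1≤j,k≤n} (1/(jk)) |Ψ_n(j)Ψ_n(k) − Ψ_n(j+k)·1_{j+k≤n}| ≤ C, where 1_{j+k≤n} equals 1 if j+k ≤ n and 0 otherwise. -/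
open Finset

noncomputable def ww (θ : ℝ) : ℕ → ℝ
  | 0 => 1
  | (n + 1) => ww θ n * ((θ + n) / (n + 1))

lemma ww_pos {θ : ℝ} (hθ : 0 < θ) (n : ℕ) : 0 < ww θ n := by
  induction n with
  | zero => simp [ww]
  | succ n ih => rw [ww]; positivity

lemma ww_succ (θ : ℝ) (n : ℕ) : ((n : ℝ) + 1) * ww θ (n + 1) = (θ + n) * ww θ n := by
  rw [ww]; field_simp

lemma Psi_eq {θ : ℝ} (hθ : 0 < θ) (n j : ℕ) (h : j ≤ n) :
    Psi θ n j = ww θ (n - j) / ww θ n := by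
  induction j with
  | zero => simp [Psi, (ww_pos hθ n).ne']
  | succ j ih =>
    have h1 := ih (by omega)
    unfold Psi at h1 ⊢
    rw [Finset.prod_range_succ, h1]
    obtain ⟨m, rfl⟩ : ∃ m, n = m + 1 + j := ⟨n - 1 - j, by omega⟩
    have e1 : m + 1 + j - j = m + 1 := by omega
    have e2 : m + 1 + j - (j + 1) = m := by omega
    rw [e1, e2, ww]
    have := ww_pos hθ (m + 1 + j)
    have h3 : θ + ((m + 1 + j : ℕ) : ℝ) - 1 - j = θ + m := by push_cast; ring
    have h4 : ((m + 1 + j : ℕ) : ℝ) - j = m + 1 := by push_cast; ring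
    rw [h3, h4]
    have : θ + (m : ℝ) ≠ 0 := by positivity
    field_simp

lemma ww_logconcave {θ : ℝ} (hθ : 1 ≤ θ) (a j k : ℕ) :
    ww θ a * ww θ (a + j + k) ≤ ww θ (a + j) * ww θ (a + k) := by
  have h0 : 0 < θ := by linarith
  induction k with
  | zero => simp [mul_comm]
  | succ k ih =>
    rw [← add_assoc, ← add_assoc, ww, ww, ← mul_assoc, ← mul_assoc]
    have := ww_pos h0
    refine mul_le_mul ih ?_ (by positivity) (by have := ww_pos h0 (a+j); have := ww_pos h0 (a+k); positivity)
    rw [div_le_div_iff₀ (by positivity) (by positivity)]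
    push_cast
    nlinarith [mul_nonneg (Nat.cast_nonneg (α := ℝ) j) (sub_nonneg.2 hθ)]

lemma ww_logconvex {θ : ℝ} (h0 : 0 < θ) (hθ : θ ≤ 1) (a j k : ℕ) :
    ww θ (a + j) * ww θ (a + k) ≤ ww θ a * ww θ (a + j + k) := by
  induction k with
  | zero => simp [mul_comm]
  | succ k ih =>
    rw [← add_assoc, ← add_assoc, ww, ww, ← mul_assoc, ← mul_assoc]
    refine mul_le_mul ih ?_ (by positivity) (by have := ww_pos h0 (a+j+k); have := ww_pos h0 a; positivity)
    rw [div_le_div_iff₀ (by positivity) (by positivity)]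
    push_cast
    nlinarith [mul_nonneg (Nat.cast_nonneg (α := ℝ) j) (sub_nonneg.2 hθ)]

noncomputable def WW (θ : ℝ) : PowerSeries ℝ := PowerSeries.mk (ww θ)
noncomputable def LL : PowerSeries ℝ := PowerSeries.mk (fun n => 1 / (n : ℝ))

open PowerSeries in
lemma coeff_one_sub_deriv (F : PowerSeries ℝ) (n : ℕ) :
    coeff n ((1 - X) * derivative ℝ F) = (n + 1) * coeff (n + 1) F - n * coeff n F := by
  rw [sub_mul, one_mul, map_sub]
  cases n with
  | zero => simp [coeff_derivative]
  | succ n =>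
    rw [coeff_succ_X_mul, coeff_derivative, coeff_derivative]
    push_cast; ring

open PowerSeries in
lemma WW_deriv (θ : ℝ) : (1 - X) * derivative ℝ (WW θ) = C θ * WW θ := by
  ext n
  rw [coeff_one_sub_deriv]
  simp only [WW, coeff_mk, coeff_C_mul]
  rw [ww_succ]; ring

open PowerSeries in
lemma LL_deriv : (1 - X) * derivative ℝ LL = 1 := by
  ext n
  rw [coeff_one_sub_deriv]
  simp only [LL, coeff_mk, coeff_one]
  have : ((n : ℝ) + 1) ≠ 0 := by positivity
  rcases Nat.eq_zero_or_pos n with rfl | h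
  · simp
  · have : (n : ℝ) ≠ 0 := by positivity
    rw [if_neg h.ne']; push_cast; field_simp; simp

open PowerSeries in
lemma aa_rec (θ : ℝ) (n : ℕ) : ((n : ℝ) + 1) * coeff (n + 1) (WW θ * LL)
    = (θ + n) * coeff n (WW θ * LL) + ww θ n := by
  have h : (1 - X) * derivative ℝ (WW θ * LL) = C θ * (WW θ * LL) + WW θ := by
    rw [Derivation.leibniz, smul_eq_mul, smul_eq_mul]
    linear_combination LL * WW_deriv θ + WW θ * LL_deriv
  have h2 := congrArg (coeff n) h
  rw [coeff_one_sub_deriv, map_add, coeff_C_mul] at h2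
  have : coeff n (WW θ) = ww θ n := by simp [WW]
  linarith

open PowerSeries in
lemma bb_rec (θ : ℝ) (n : ℕ) : ((n : ℝ) + 1) * coeff (n + 1) (LL * (WW θ * LL))
    = (θ + n) * coeff n (LL * (WW θ * LL)) + 2 * coeff n (WW θ * LL) := by
  have h : (1 - X) * derivative ℝ (LL * (WW θ * LL))
      = C θ * (LL * (WW θ * LL)) + (WW θ * LL + WW θ * LL) := by
    simp only [Derivation.leibniz, smul_eq_mul]
    linear_combination LL * LL * WW_deriv θ + 2 * LL * WW θ * LL_deriv
  have h2 := congrArg (coeff n) h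
  rw [coeff_one_sub_deriv, map_add, map_add, coeff_C_mul] at h2
  linarith

open PowerSeries in
lemma dd_rec (θ : ℝ) (n : ℕ) : ((n : ℝ) + 1) * coeff (n + 1) (WW θ * WW θ)
    = (2 * θ + n) * coeff n (WW θ * WW θ) := by
  have h : (1 - X) * derivative ℝ (WW θ * WW θ)
      = C θ * (WW θ * WW θ) + C θ * (WW θ * WW θ) := by
    simp only [Derivation.leibniz, smul_eq_mul]
    linear_combination 2 * WW θ * WW_deriv θ
  have h2 := congrArg (coeff n) h
  rw [coeff_one_sub_deriv, map_add, coeff_C_mul] at h2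
  linarith

noncomputable def HH (θ : ℝ) (n : ℕ) : ℝ := ∑ i ∈ Finset.range n, 1 / (θ + i)
noncomputable def QQ (θ : ℝ) (n : ℕ) : ℝ := ∑ i ∈ Finset.range n, 1 / (θ + i) ^ 2

open PowerSeries in
lemma aa_eq {θ : ℝ} (hθ : 0 < θ) (n : ℕ) : coeff n (WW θ * LL) = ww θ n * HH θ n := by
  induction n with
  | zero => simp [HH, LL, coeff_mul]
  | succ n ih =>
    have h := aa_rec θ n
    have h1 := ww_succ θ n
    have : (n : ℝ) + 1 ≠ 0 := by positivity
    have h3 : θ + (n : ℝ) ≠ 0 := by positivity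
    apply mul_left_cancel₀ this
    rw [h, ← mul_assoc, h1, ih]
    simp only [HH, Finset.sum_range_succ]
    field_simp

open PowerSeries in
lemma bb_eq {θ : ℝ} (hθ : 0 < θ) (n : ℕ) :
    coeff n (LL * (WW θ * LL)) = ww θ n * (HH θ n ^ 2 - QQ θ n) := by
  induction n with
  | zero => simp [HH, QQ, LL, coeff_mul]
  | succ n ih =>
    have h := bb_rec θ n
    have h1 := ww_succ θ n
    have : (n : ℝ) + 1 ≠ 0 := by positivity
    have h3 : θ + (n : ℝ) ≠ 0 := by positivity
    apply mul_left_cancel₀ this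
    rw [h, ← mul_assoc ((n : ℝ) + 1), h1, ih, aa_eq hθ]
    simp only [HH, QQ, Finset.sum_range_succ]
    field_simp
    ring

open PowerSeries in
lemma LL_mul_coeff (F : PowerSeries ℝ) (n : ℕ) :
    coeff n (LL * F) = ∑ j ∈ Finset.Icc 1 n, 1 / (j : ℝ) * coeff (n - j) F := by
  rw [coeff_mul, Finset.Nat.sum_antidiagonal_eq_sum_range_succ_mk]
  symm
  apply Finset.sum_subset_zero_on_sdiff
  · intro x hx; simp at hx ⊢; omega
  · intro x hx; simp at hx
    have : x = 0 := by omega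
    simp [this, LL]
  · intro x hx; simp [LL]

open PowerSeries in
lemma aa_sum (θ : ℝ) (n : ℕ) :
    coeff n (WW θ * LL) = ∑ j ∈ Finset.Icc 1 n, 1 / (j : ℝ) * ww θ (n - j) := by
  rw [mul_comm, LL_mul_coeff]; simp [WW]

open PowerSeries in
lemma bb_sum (θ : ℝ) (n : ℕ) :
    coeff n (LL * (WW θ * LL)) = ∑ j ∈ Finset.Icc 1 n, ∑ k ∈ Finset.Icc 1 n,
      1 / ((j : ℝ) * k) * (if j + k ≤ n then ww θ (n - (j + k)) else 0) := by
  rw [LL_mul_coeff]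
  apply Finset.sum_congr rfl
  intro j hj
  rw [aa_sum, Finset.mul_sum]
  apply Finset.sum_subset_zero_on_sdiff
  · intro x hx; simp at hx ⊢; omega
  · intro x hx; simp at hx
    rw [if_neg (by simp at hj; omega), mul_zero]
  · intro x hx; simp at hx hj
    rw [if_pos (by omega), Nat.sub_sub, ← mul_assoc]
    congr 1
    rw [one_div_mul_one_div]

open PowerSeries in
lemma dd_le {θ : ℝ} (hθ : 0 < θ) (n : ℕ) :
    coeff (n + 1) (WW θ * WW θ) ≤ 2 / θ * ((n + 1) * ww θ (n + 1) ^ 2) := by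
  induction n with
  | zero =>
    have := dd_rec θ 0
    have h2 : coeff 0 (WW θ * WW θ) = 1 := by simp [WW, ww, coeff_mul]
    rw [h2] at this
    norm_num at this
    simp only [zero_add, this, ww]
    norm_num
    apply le_of_eq; field_simp
  | succ n ih =>
    have h := dd_rec θ (n + 1)
    have h1 := ww_succ θ (n + 1)
    set d := coeff (n + 1) (WW θ * WW θ)
    set d' := coeff (n + 1 + 1) (WW θ * WW θ)
    set w := ww θ (n + 1)
    push_cast at h h1 ⊢
    have hw' : ww θ (n + 1 + 1) = (θ + (n + 1)) * w / (n + 1 + 1) := by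
      rw [eq_div_iff (by positivity)]; linarith
    have hd' : d' = (2 * θ + (n + 1)) * d / (n + 1 + 1) := by
      rw [eq_div_iff (by positivity)]; linarith
    rw [hw', hd']
    calc (2 * θ + (n + 1)) * d / ((n : ℝ) + 1 + 1)
        ≤ (2 * θ + (n + 1)) * (2 / θ * ((n + 1) * w ^ 2)) / ((n : ℝ) + 1 + 1) := by gcongr
      _ = 2 / θ * w ^ 2 / ((n : ℝ) + 1 + 1) * ((2 * θ + (n + 1)) * (n + 1)) := by ring
      _ ≤ 2 / θ * w ^ 2 / ((n : ℝ) + 1 + 1) * (θ + (n + 1)) ^ 2 := by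
          gcongr
          nlinarith [sq_nonneg θ]
      _ = _ := by field_simp

lemma ww_sum {θ : ℝ} (hθ : 0 < θ) (k : ℕ) :
    ∑ m ∈ Finset.range k, ww θ m = k / θ * ww θ k := by
  induction k with
  | zero => simp
  | succ k ih =>
    rw [Finset.sum_range_succ, ih]
    have := ww_succ θ k
    push_cast
    rw [div_mul_eq_mul_div, div_mul_eq_mul_div, this]
    field_simp
    ring

lemma QQ_le {θ : ℝ} (hθ : 0 < θ) (n : ℕ) :
    QQ θ (n + 1) ≤ 1 / θ ^ 2 + 1 / θ - 1 / (θ + n) := by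
  induction n with
  | zero => simp [QQ]
  | succ n ih =>
    unfold QQ at ih ⊢
    rw [Finset.sum_range_succ]
    have : 1 / (θ + ((n + 1 : ℕ) : ℝ)) ^ 2 ≤ 1 / (θ + n) - 1 / (θ + ((n + 1 : ℕ) : ℝ)) := by
      push_cast
      rw [div_sub_div _ _ (by positivity) (by positivity), div_le_div_iff₀ (by positivity) (by positivity)]
      have : 0 < θ + (n : ℝ) := by positivity
      have e : θ + ((n : ℝ) + 1) = (θ + n) + 1 := by ring
      rw [e]
      generalize θ + (n : ℝ) = x at *
      nlinarith [mul_pos this this]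
    linarith

open PowerSeries in
/-- off-triangle part -/
lemma PP_le {θ : ℝ} (hθ : 0 < θ) (n : ℕ) (hn : 1 ≤ n) :
    ∑ j ∈ Finset.Icc 1 n, ∑ k ∈ Finset.Icc 1 n,
      1 / ((j : ℝ) * k) * (if j + k ≤ n then 0 else ww θ (n - j) * ww θ (n - k))
    ≤ 4 / θ ^ 2 * ww θ n ^ 2 := by
  have hnp : (0 : ℝ) < n := by exact_mod_cast hn
  have hw := fun m => (ww_pos hθ m).le
  set T : ℕ → ℕ → ℝ := fun j k =>
    1 / (j : ℝ) * (if j + k ≤ n then 0 else ww θ (n - j) * ww θ (n - k)) with hT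
  have inner : ∀ j ∈ Finset.Icc 1 n, ∑ k ∈ Finset.Icc 1 n, T j k
      = 1 / θ * (ww θ j * ww θ (n - j)) := by
    intro j hj
    simp at hj
    have hj0 : (j : ℝ) ≠ 0 := by
      have : j ≠ 0 := by omega
      exact_mod_cast this
    have e : ∑ k ∈ Finset.Icc 1 n, (if j + k ≤ n then 0 else ww θ (n - j) * ww θ (n - k))
        = ww θ (n - j) * ∑ m ∈ Finset.range j, ww θ m := by
      rw [Finset.mul_sum]
      have : ∀ k ∈ Finset.Icc 1 n, (if j + k ≤ n then 0 else ww θ (n - j) * ww θ (n - k))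
        = (if n < j + k then ww θ (n - j) * ww θ (n - k) else 0) := by
        intro k _
        split_ifs <;> first | rfl | omega
      rw [Finset.sum_congr rfl this, ← Finset.sum_filter]
      apply Finset.sum_nbij' (fun k => n - k) (fun m => n - m)
      all_goals (intro x hx; simp at hx ⊢; try omega)
    simp only [hT]
    rw [← Finset.mul_sum, e, ww_sum hθ]
    field_simp
  have hsum : ∑ j ∈ Finset.Icc 1 n, ∑ k ∈ Finset.Icc 1 n, T j k ≤ 2 / θ ^ 2 * (n * ww θ n ^ 2) := by
    rw [Finset.sum_congr rfl inner, ← Finset.mul_sum]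
    have hd : ∑ j ∈ Finset.Icc 1 n, ww θ j * ww θ (n - j) ≤ coeff n (WW θ * WW θ) := by
      rw [coeff_mul, Finset.Nat.sum_antidiagonal_eq_sum_range_succ_mk]
      simp only [WW, coeff_mk]
      apply Finset.sum_le_sum_of_subset_of_nonneg
      · intro x hx; simp at hx ⊢; omega
      · intro x _ _; exact mul_nonneg (hw _) (hw _)
    obtain ⟨m, rfl⟩ : ∃ m, n = m + 1 := ⟨n - 1, by omega⟩
    have h2 := hd.trans (dd_le hθ m)
    calc _ ≤ 1 / θ * (2 / θ * (((m : ℝ) + 1) * ww θ (m + 1) ^ 2)) := by gcongr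
      _ = _ := by push_cast; field_simp
  have hsum' : ∑ j ∈ Finset.Icc 1 n, ∑ k ∈ Finset.Icc 1 n, T k j ≤ 2 / θ ^ 2 * (n * ww θ n ^ 2) := by
    rw [Finset.sum_comm]; exact hsum
  calc _ ≤ ∑ j ∈ Finset.Icc 1 n, ∑ k ∈ Finset.Icc 1 n, (1 / (n : ℝ)) * (T j k + T k j) := by
        refine Finset.sum_le_sum fun j hj => Finset.sum_le_sum fun k hk => ?_
        simp at hj hk
        simp only [hT, add_comm k j]
        split_ifs with h
        · simp
        · rw [mul_comm (ww θ (n - k)), ← add_mul, ← mul_assoc (1 / (n : ℝ))]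
          apply mul_le_mul_of_nonneg_right _ (mul_nonneg (hw _) (hw _))
          have hj0 : (0 : ℝ) < j := by exact_mod_cast hj.1
          have hk0 : (0 : ℝ) < k := by exact_mod_cast hk.1
          have : (n : ℝ) ≤ j + k := by exact_mod_cast (by omega : n ≤ j + k)
          rw [div_add_div _ _ hj0.ne' hk0.ne', div_mul_div_comm,
            div_le_div_iff₀ (by positivity) (by positivity)]
          nlinarith [mul_le_mul_of_nonneg_left this (mul_pos hj0 hk0).le]
    _ = (1 / (n : ℝ)) * (∑ j ∈ Finset.Icc 1 n, ∑ k ∈ Finset.Icc 1 n, T j k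
          + ∑ j ∈ Finset.Icc 1 n, ∑ k ∈ Finset.Icc 1 n, T k j) := by
        simp only [← Finset.mul_sum, Finset.sum_add_distrib]
    _ ≤ (1 / (n : ℝ)) * (2 / θ ^ 2 * (n * ww θ n ^ 2) + 2 / θ ^ 2 * (n * ww θ n ^ 2)) := by gcongr
    _ = _ := by field_simp; ring

lemma main_w {θ : ℝ} (hθ : 0 < θ) (n : ℕ) (hn : 1 ≤ n) :
    ∑ j ∈ Finset.Icc 1 n, ∑ k ∈ Finset.Icc 1 n,
      1 / ((j : ℝ) * k) * |ww θ (n - j) * ww θ (n - k)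
        - ww θ n * (if j + k ≤ n then ww θ (n - (j + k)) else 0)|
    ≤ (1 / θ ^ 2 + 1 / θ + 8 / θ ^ 2) * ww θ n ^ 2 := by
  have hw := fun m => (ww_pos hθ m).le
  set f : ℕ → ℕ → ℝ := fun j k => ww θ (n - j) * ww θ (n - k)
        - ww θ n * (if j + k ≤ n then ww θ (n - (j + k)) else 0) with hf
  set g : ℕ → ℕ → ℝ := fun j k =>
    (if j + k ≤ n then 0 else ww θ (n - j) * ww θ (n - k)) with hg
  have hg0 : ∀ j k, 0 ≤ g j k := by
    intro j k; simp only [hg]; split_ifs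
    · exact le_rfl
    · exact mul_nonneg (hw _) (hw _)
  have hS : ∑ j ∈ Finset.Icc 1 n, ∑ k ∈ Finset.Icc 1 n, 1 / ((j : ℝ) * k) * f j k
      = ww θ n ^ 2 * QQ θ n := by
    have ha := (aa_sum θ n).symm.trans (aa_eq hθ n)
    have hb := (bb_sum θ n).symm.trans (bb_eq hθ n)
    have : ∑ j ∈ Finset.Icc 1 n, ∑ k ∈ Finset.Icc 1 n, 1 / ((j : ℝ) * k) * f j k
       = (∑ j ∈ Finset.Icc 1 n, 1 / (j : ℝ) * ww θ (n - j)) *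
         (∑ j ∈ Finset.Icc 1 n, 1 / (j : ℝ) * ww θ (n - j))
         - ww θ n * ∑ j ∈ Finset.Icc 1 n, ∑ k ∈ Finset.Icc 1 n,
      1 / ((j : ℝ) * k) * (if j + k ≤ n then ww θ (n - (j + k)) else 0) := by
      rw [Finset.sum_mul_sum, Finset.mul_sum, ← Finset.sum_sub_distrib]
      refine Finset.sum_congr rfl fun j _ => ?_
      rw [Finset.mul_sum, ← Finset.sum_sub_distrib]
      refine Finset.sum_congr rfl fun k _ => ?_
      simp only [hf]
      rw [← one_div_mul_one_div]; ring
    rw [this, ha, hb]; ring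
  have hQ : QQ θ n ≤ 1 / θ ^ 2 + 1 / θ := by
    obtain ⟨m, rfl⟩ : ∃ m, n = m + 1 := ⟨n - 1, by omega⟩
    have := QQ_le hθ m
    have : 0 ≤ 1 / (θ + m) := by positivity
    linarith
  have hQ0 : 0 ≤ QQ θ n := Finset.sum_nonneg fun i _ => by positivity
  have hP := PP_le hθ n hn
  have key : ∃ s : ℝ, s ≤ 1 ∧ ∀ j k, j ≤ n → k ≤ n → |f j k| ≤ s * f j k + 2 * g j k := by
    rcases le_total 1 θ with h | h
    · refine ⟨1, le_rfl, fun j k hj hk => ?_⟩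
      have : 0 ≤ f j k := by
        simp only [hf]
        split_ifs with hjk
        · have := ww_logconcave h (n - (j + k)) k j
          rw [show n - (j + k) + k = n - j by omega, show n - j + j = n by omega,
            show n - (j + k) + j = n - k by omega] at this
          linarith
        · have := mul_nonneg (hw (n - j)) (hw (n - k)); linarith
      rw [abs_of_nonneg this]; linarith [hg0 j k]
    · refine ⟨-1, by norm_num, fun j k hj hk => ?_⟩
      by_cases hjk : j + k ≤ n
      · have : f j k ≤ 0 := by
          simp only [hf]
          rw [if_pos hjk]
          have := ww_logconvex hθ h (n - (j + k)) k j
          rw [show n - (j + k) + k = n - j by omega, show n - j + j = n by omega,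
            show n - (j + k) + j = n - k by omega] at this
          linarith
        rw [abs_of_nonpos this]; linarith [hg0 j k]
      · simp only [hf, hg, if_neg hjk, mul_zero, sub_zero]
        rw [abs_of_nonneg (mul_nonneg (hw _) (hw _))]
        linarith
  obtain ⟨s, hs, hk⟩ := key
  calc _ ≤ ∑ j ∈ Finset.Icc 1 n, ∑ k ∈ Finset.Icc 1 n,
        (s * (1 / ((j : ℝ) * k) * f j k) + 2 * (1 / ((j : ℝ) * k) * g j k)) := by
        refine Finset.sum_le_sum fun j hj => Finset.sum_le_sum fun k hk' => ?_
        simp at hj hk'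
        have := mul_le_mul_of_nonneg_left (hk j k hj.2 hk'.2)
          (by positivity : 0 ≤ 1 / ((j : ℝ) * k))
        linarith
    _ = s * (ww θ n ^ 2 * QQ θ n) + 2 * ∑ j ∈ Finset.Icc 1 n, ∑ k ∈ Finset.Icc 1 n,
          (1 / ((j : ℝ) * k) * g j k) := by
        rw [← hS]
        simp only [← Finset.mul_sum, Finset.sum_add_distrib]
    _ ≤ 1 * (ww θ n ^ 2 * (1 / θ ^ 2 + 1 / θ)) + 2 * (4 / θ ^ 2 * ww θ n ^ 2) := by
        have : s * (ww θ n ^ 2 * QQ θ n) ≤ 1 * (ww θ n ^ 2 * QQ θ n) :=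
          mul_le_mul_of_nonneg_right hs (by positivity)
        have h2 : ww θ n ^ 2 * QQ θ n ≤ ww θ n ^ 2 * (1 / θ ^ 2 + 1 / θ) := by gcongr
        linarith
    _ = _ := by ring

/-- There is a constant `C` (depending only on `θ`) such that for all `n ≥ 1`,
`∑_{1≤j,k≤n} (1/(jk)) |Ψ_n(j)Ψ_n(k) − Ψ_n(j+k)·1_{j+k≤n}| ≤ C`. -/
theorem stmt_6 (θ : ℝ) (hθ : 0 < θ) :
    ∃ C : ℝ, ∀ n : ℕ, 1 ≤ n →
      ∑ j ∈ Finset.Icc 1 n, ∑ k ∈ Finset.Icc 1 n,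
          (1 / ((j : ℝ) * (k : ℝ))) *
            |Psi θ n j * Psi θ n k - (if j + k ≤ n then Psi θ n (j + k) else 0)|
        ≤ C := by
  refine ⟨1 / θ ^ 2 + 1 / θ + 8 / θ ^ 2, fun n hn => ?_⟩
  have hw := ww_pos hθ n
  have hm := main_w hθ n hn
  rw [← div_le_iff₀ (by positivity)] at hm
  refine le_trans (le_of_eq ?_) hm
  rw [Finset.sum_div]
  refine Finset.sum_congr rfl fun j hj => ?_
  rw [Finset.sum_div]
  refine Finset.sum_congr rfl fun k hk => ?_
  simp at hj hk
  rw [mul_div_assoc]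
  congr 1
  rw [← abs_of_pos (show 0 < ww θ n ^ 2 by positivity), ← abs_div]
  congr 1
  rw [Psi_eq hθ n j hj.2, Psi_eq hθ n k hk.2]
  split_ifs with h
  · rw [Psi_eq hθ n _ h]; field_simp
  · field_simp; simp
end

section
/- Let θ > 0, N ≥ 1 an integer, and let α, β be real numbers with 0 ≤ α < 1 and α < β ≤ α + 1. Then the expectation of X_N^I under the Ewens measure of parameter θ on S_N satisfies ∑_{σ ∈ S_N} P_θ^{(N)}(σ) X_N^I(σ) = N(β − α) − θ ∑_{j=1}^N (Ψ_N(j)/j)({jβ} − {jα}). -/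
open Finset

/-- The number of `j`-cycles of a permutation of `{1,…,N}`, where fixed points
are counted as `1`-cycles. -/
def cycleCount (N : ℕ) (σ : Equiv.Perm (Fin N)) (j : ℕ) : ℕ :=
  if j = 1 then N - σ.support.card else σ.cycleType.count j

/-- The total number of cycles of `σ`, fixed points counted as `1`-cycles. -/
def totalCycles (N : ℕ) (σ : Equiv.Perm (Fin N)) : ℕ :=
  Multiset.card σ.cycleType + (N - σ.support.card)

/-- The Ewens probability of parameter `θ` of the permutation `σ`:
`θ^{K(σ)} / (θ(θ+1)⋯(θ+N−1))`. -/
noncomputable def ewens (θ : ℝ) (N : ℕ) (σ : Equiv.Perm (Fin N)) : ℝ :=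
  θ ^ totalCycles N σ / ∏ i ∈ Finset.range N, (θ + (i : ℝ))

/-- The number of eigenvalues of the permutation matrix of `σ` in the arc
`(e^{2iπα}, e^{2iπβ}]`: `X_N^I(σ) = ∑_{j=1}^N a_{N,j}(σ)(⌊jβ⌋ − ⌊jα⌋)`. -/
noncomputable def XNI (N : ℕ) (α β : ℝ) (σ : Equiv.Perm (Fin N)) : ℝ :=
  ∑ j ∈ Finset.Icc 1 N,
    (cycleCount N σ j : ℝ) * ((⌊(j : ℝ) * β⌋ : ℝ) - (⌊(j : ℝ) * α⌋ : ℝ))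

theorem ew_swap_key {N : ℕ} (σ : Equiv.Perm (Fin N)) (x : Fin N) (hx : σ x ≠ x) :
    totalCycles N (Equiv.swap x (σ x) * σ) = totalCycles N σ + 1 := by
  have hmem : σ.cycleOf x ∈ σ.cycleFactorsFinset := by
    rw [Equiv.Perm.cycleOf_mem_cycleFactorsFinset_iff, Equiv.Perm.mem_support]; exact hx
  have hcyc : (σ.cycleOf x).IsCycle := Equiv.Perm.isCycle_cycleOf σ hx
  have hd := (Equiv.Perm.disjoint_mul_inv_of_mem_cycleFactorsFinset hmem).symm
  have hcx : σ.cycleOf x x = σ x := Equiv.Perm.cycleOf_apply_self σ x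
  have hσ : σ.cycleOf x * (σ * (σ.cycleOf x)⁻¹) = σ := by
    rw [hd.commute.eq]; group
  generalize σ.cycleOf x = c at *
  generalize σ * c⁻¹ = r at *
  have hcne : c x ≠ x := by rw [hcx]; exact hx
  have b1 : σ.support.card ≤ N := by simpa using Finset.card_le_univ σ.support
  have b2 : (Equiv.swap x (σ x) * σ).support.card ≤ N := by
    simpa using Finset.card_le_univ (Equiv.swap x (σ x) * σ).support
  rw [← hcx] at b2 ⊢
  rw [← hσ] at b1 b2 ⊢
  rw [← mul_assoc] at b2 ⊢
  unfold totalCycles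
  by_cases h2 : c (c x) = x
  · have hsw : c = Equiv.swap x (c x) := hcyc.eq_swap_of_apply_apply_eq_self hcne h2
    have h1 : Equiv.swap x (c x) * c = 1 := by
      nth_rewrite 2 [hsw]; simp
    have h3 : c.support.card = 2 := by
      rw [hsw]; exact Equiv.Perm.card_support_swap (Ne.symm hcne)
    rw [h1, one_mul] at b2 ⊢
    rw [hd.cycleType_mul, hd.card_support_mul, h3, hcyc.cycleType]
    rw [hd.card_support_mul, h3] at b1
    simp only [Multiset.card_add, Multiset.card_singleton]
    omega
  · have hc' : (Equiv.swap x (c x) * c).IsCycle := hcyc.swap_mul hcne h2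
    have hs := Equiv.Perm.support_swap_mul_eq c x h2
    have hd' : (Equiv.swap x (c x) * c).Disjoint r := by
      rw [Equiv.Perm.disjoint_iff_disjoint_support] at hd ⊢
      rw [hs]
      exact hd.mono_left (Finset.sdiff_subset)
    have hxm : x ∈ c.support := Equiv.Perm.mem_support.2 hcne
    have hcard : (Equiv.swap x (c x) * c).support.card + 1 = c.support.card := by
      rw [hs, Finset.sdiff_singleton_eq_erase, Finset.card_erase_add_one hxm]
    rw [hd'.card_support_mul] at b2
    rw [hd.card_support_mul] at b1
    rw [hd.cycleType_mul, hd.card_support_mul, hd'.cycleType_mul, hd'.card_support_mul,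
      hcyc.cycleType, hc'.cycleType]
    simp only [Multiset.card_add, Multiset.card_singleton]
    omega

theorem ew_lift_cycleType {n : ℕ} (e : Equiv.Perm (Fin n)) :
    (Equiv.Perm.decomposeFin.symm ((0 : Fin (n+1)), e)).cycleType = e.cycleType := by
  have : Equiv.Perm.decomposeFin.symm ((0 : Fin (n+1)), e)
      = e.extendDomain (finSuccAboveEquiv (0 : Fin (n+1))) := by
    ext x
    congr 1
    refine Fin.cases ?_ (fun i => ?_) x
    · rw [Equiv.Perm.extendDomain_apply_not_subtype _ _ (by simp)]
      simp
    · have h := Equiv.Perm.extendDomain_apply_image e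
        (finSuccAboveEquiv (0 : Fin (n+1))) i
      simp only [finSuccAboveEquiv_apply, Fin.succAbove_zero] at h
      rw [h]
      simp
  rw [this, Equiv.Perm.cycleType_extendDomain]

theorem ew_total_zero {n : ℕ} (e : Equiv.Perm (Fin n)) :
    totalCycles (n+1) (Equiv.Perm.decomposeFin.symm ((0 : Fin (n+1)), e))
      = totalCycles n e + 1 := by
  unfold totalCycles
  rw [← Equiv.Perm.sum_cycleType, ← Equiv.Perm.sum_cycleType, ew_lift_cycleType]
  have := Equiv.Perm.sum_cycleType_le e
  rw [Fintype.card_fin] at this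
  omega

theorem ew_total_succ {n : ℕ} (e : Equiv.Perm (Fin n)) (p : Fin n) :
    totalCycles (n+1) (Equiv.Perm.decomposeFin.symm (p.succ, e)) = totalCycles n e := by
  have h := ew_swap_key (Equiv.Perm.decomposeFin.symm (p.succ, e)) 0 (by simp)
  have h2 : Equiv.swap 0 ((Equiv.Perm.decomposeFin.symm (p.succ, e)) 0) *
      Equiv.Perm.decomposeFin.symm (p.succ, e)
      = Equiv.Perm.decomposeFin.symm ((0 : Fin (n+1)), e) := by
    ext x
    congr 1
    refine Fin.cases ?_ (fun i => ?_) x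
    · simp
    · simp [Equiv.Perm.decomposeFin_symm_apply_succ]
  rw [h2, ew_total_zero] at h
  exact (Nat.succ_injective h).symm

theorem ew_mp_zero {n : ℕ} (e : Equiv.Perm (Fin n)) :
    Function.minimalPeriod (Equiv.Perm.decomposeFin.symm ((0 : Fin (n+1)), e)) 0 = 1 := by
  rw [Function.minimalPeriod_eq_one_iff_isFixedPt]
  simp [Function.IsFixedPt]

theorem ew_mp_pos {n : ℕ} (e : Equiv.Perm (Fin n)) (p : Fin n) :
    0 < Function.minimalPeriod e p := by
  apply Function.minimalPeriod_pos_of_mem_periodicPts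
  exact Function.Injective.mem_periodicPts e.injective p

theorem ew_mp_succ {n : ℕ} (e : Equiv.Perm (Fin n)) (p : Fin n) :
    Function.minimalPeriod (Equiv.Perm.decomposeFin.symm (p.succ, e)) 0
      = Function.minimalPeriod e p + 1 := by
  set τ := Equiv.Perm.decomposeFin.symm (p.succ, e) with hτ
  set l := Function.minimalPeriod e p with hl
  have hl0 : 0 < l := ew_mp_pos e p
  have key : ∀ k, k < l → τ^[k+1] 0 = (e^[k] p).succ := by
    intro k
    induction k with
    | zero => intro _; simp [hτ]
    | succ k ih =>
      intro hk
      rw [Function.iterate_succ_apply', ih (by omega), hτ,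
        Equiv.Perm.decomposeFin_symm_apply_succ, ← Function.iterate_succ_apply' (f := e)]
      apply Equiv.swap_apply_of_ne_of_ne
      · simp
      · intro h
        have h' : e^[k+1] p = p := Fin.succ_injective _ h
        exact Function.not_isPeriodicPt_of_pos_of_lt_minimalPeriod (by omega) hk h'
  have hlast : τ^[l+1] 0 = 0 := by
    obtain ⟨k, hk⟩ : ∃ k, l = k + 1 := ⟨l - 1, by omega⟩
    have hp : e^[k+1] p = p := by
      rw [← hk]; exact Function.isPeriodicPt_minimalPeriod e p
    rw [Function.iterate_succ_apply', hk, key k (by omega), hτ,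
      Equiv.Perm.decomposeFin_symm_apply_succ, ← Function.iterate_succ_apply' (f := e), hp]
    simp
  apply le_antisymm
  · exact Function.IsPeriodicPt.minimalPeriod_le (by omega) hlast
  · by_contra hlt
    push Not at hlt
    have hpos : 0 < Function.minimalPeriod τ 0 := ew_mp_pos τ 0
    obtain ⟨k, hk⟩ : ∃ k, Function.minimalPeriod τ 0 = k + 1 :=
      ⟨Function.minimalPeriod τ 0 - 1, by omega⟩
    have h1 : τ^[k+1] 0 = 0 := by
      rw [← hk]; exact Function.isPeriodicPt_minimalPeriod τ 0
    rw [key k (by omega)] at h1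
    exact Fin.succ_ne_zero _ h1

theorem ew_mp_card {n : ℕ} (σ : Equiv.Perm (Fin n)) (x : Fin n) (hx : σ x ≠ x) :
    Function.minimalPeriod σ x = (σ.cycleOf x).support.card := by
  have hcyc : (σ.cycleOf x).IsCycle := Equiv.Perm.isCycle_cycleOf σ hx
  rw [← hcyc.orderOf]
  have hcx : σ.cycleOf x x ≠ x := by rw [Equiv.Perm.cycleOf_apply_self]; exact hx
  have h : ∀ k, (σ.cycleOf x) ^ k = 1 ↔ Function.IsPeriodicPt σ k x := by
    intro k
    rw [hcyc.pow_eq_one_iff' hcx, Equiv.Perm.cycleOf_pow_apply_self, Function.IsPeriodicPt,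
      Function.IsFixedPt, Equiv.Perm.iterate_eq_pow]
  apply Nat.dvd_antisymm
  · rw [← Function.isPeriodicPt_iff_minimalPeriod_dvd, ← h, pow_orderOf_eq_one]
  · rw [orderOf_dvd_iff_pow_eq_one, h]
    exact Function.isPeriodicPt_minimalPeriod σ x

theorem ew_count {n : ℕ} (σ : Equiv.Perm (Fin n)) (j : ℕ) (hj : 1 ≤ j) :
    j * cycleCount n σ j = #{x : Fin n | Function.minimalPeriod σ x = j} := by
  unfold cycleCount
  split_ifs with h1
  · subst h1
    have : ({x : Fin n | Function.minimalPeriod σ x = 1} : Finset (Fin n)) = σ.supportᶜ := by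
      ext x
      simp [Function.minimalPeriod_eq_one_iff_isFixedPt, Function.IsFixedPt]
    rw [this, Finset.card_compl, Fintype.card_fin, one_mul]
  · have : ({x : Fin n | Function.minimalPeriod σ x = j} : Finset (Fin n))
        = (σ.cycleFactorsFinset.filter (fun c => c.support.card = j)).biUnion
            (fun c => c.support) := by
      ext x
      simp only [Finset.mem_filter, Finset.mem_univ, true_and, Finset.mem_biUnion]
      constructor
      · intro h
        have hx : σ x ≠ x := by
          intro hfix
          have := (Function.minimalPeriod_eq_one_iff_isFixedPt (f := σ) (x := x)).2 hfix
          omega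
        refine ⟨σ.cycleOf x, ⟨?_, ?_⟩, ?_⟩
        · rw [Equiv.Perm.cycleOf_mem_cycleFactorsFinset_iff, Equiv.Perm.mem_support]; exact hx
        · rw [← ew_mp_card σ x hx, h]
        · rw [Equiv.Perm.mem_support, Equiv.Perm.cycleOf_apply_self]; exact hx
      · rintro ⟨c, ⟨hc, hcard⟩, hx⟩
        have hx' : σ x ≠ x :=
          Equiv.Perm.mem_support.1 (Equiv.Perm.mem_cycleFactorsFinset_support_le hc hx)
        rw [ew_mp_card σ x hx', ← Equiv.Perm.cycle_is_cycleOf hx hc, hcard]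
    rw [this, Finset.card_biUnion, Finset.sum_congr rfl (g := fun _ => j), Finset.sum_const,
      Equiv.Perm.cycleType_def, Multiset.count_map, smul_eq_mul, mul_comm]
    · congr 1
      rw [Finset.card_def, Finset.filter_val]
      congr 1
      apply Multiset.filter_congr
      intro c _
      simp [eq_comm]
    · intro c hc; exact (Finset.mem_filter.1 hc).2
    · intro c hc d hd hne
      apply Equiv.Perm.disjoint_iff_disjoint_support.1
      exact σ.cycleFactorsFinset_pairwise_disjoint (Finset.mem_filter.1 hc).1
        (Finset.mem_filter.1 hd).1 hne

noncomputable def ewG (θ : ℝ) (n : ℕ) : ℝ := ∑ σ : Equiv.Perm (Fin n), θ ^ totalCycles n σ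

noncomputable def ewF (θ : ℝ) (n j : ℕ) : ℝ :=
  ∑ x : Fin n, ∑ σ : Equiv.Perm (Fin n),
    if Function.minimalPeriod σ x = j then θ ^ totalCycles n σ else 0

theorem ew_sum_decomp {n : ℕ} (f : Equiv.Perm (Fin (n+1)) → ℝ) :
    ∑ σ, f σ = ∑ e : Equiv.Perm (Fin n), f (Equiv.Perm.decomposeFin.symm (0, e))
      + ∑ p : Fin n, ∑ e : Equiv.Perm (Fin n), f (Equiv.Perm.decomposeFin.symm (p.succ, e)) := by
  rw [← Equiv.sum_comp Equiv.Perm.decomposeFin.symm, Fintype.sum_prod_type, Fin.sum_univ_succ]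

theorem ewG_succ (θ : ℝ) (n : ℕ) : ewG θ (n+1) = (θ + n) * ewG θ n := by
  unfold ewG
  rw [ew_sum_decomp]
  simp only [ew_total_zero, ew_total_succ, pow_succ, Finset.sum_const, Finset.card_univ,
    Fintype.card_fin, nsmul_eq_mul, ← Finset.sum_mul]
  ring

theorem ewG_eq (θ : ℝ) (n : ℕ) : ewG θ n = ∏ i ∈ Finset.range n, (θ + (i : ℝ)) := by
  induction n with
  | zero => simp [ewG, totalCycles]
  | succ n ih => rw [ewG_succ, ih, Finset.prod_range_succ, mul_comm]

theorem ew_symm (θ : ℝ) (n j : ℕ) (x y : Fin n) :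
    (∑ σ : Equiv.Perm (Fin n),
      if Function.minimalPeriod σ x = j then θ ^ totalCycles n σ else 0)
    = ∑ σ : Equiv.Perm (Fin n),
      if Function.minimalPeriod σ y = j then θ ^ totalCycles n σ else 0 := by
  set g := Equiv.swap x y
  rw [← Equiv.sum_comp (MulAut.conj g).toEquiv]
  apply Finset.sum_congr rfl
  intro σ _
  have h1 : totalCycles n ((MulAut.conj g).toEquiv σ) = totalCycles n σ := by
    unfold totalCycles
    rw [← Equiv.Perm.sum_cycleType, ← Equiv.Perm.sum_cycleType]
    simp [Equiv.Perm.cycleType_conj]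
  have h2 : Function.minimalPeriod ((MulAut.conj g).toEquiv σ) x
      = Function.minimalPeriod σ y := by
    apply Function.minimalPeriod_eq_minimalPeriod_iff.2
    intro k
    simp only [Function.IsPeriodicPt, Function.IsFixedPt, Equiv.Perm.iterate_eq_pow]
    have : ((MulAut.conj g).toEquiv σ) ^ k = g * σ ^ k * g⁻¹ := by simp
    rw [this]
    simp only [Equiv.Perm.mul_apply]
    rw [← Equiv.Perm.eq_inv_iff_eq]
    simp [g]
  rw [h1, h2]

theorem ewF_succ (θ : ℝ) (n j : ℕ) : ewF θ (n+1) j = (n+1) *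
    ∑ σ : Equiv.Perm (Fin (n+1)),
      if Function.minimalPeriod σ 0 = j then θ ^ totalCycles (n+1) σ else 0 := by
  unfold ewF
  rw [Finset.sum_congr rfl (fun x _ => ew_symm θ (n+1) j x 0)]
  simp

theorem ewF_one (θ : ℝ) (n : ℕ) : ewF θ (n+1) 1 = (n+1) * (θ * ewG θ n) := by
  rw [ewF_succ, ew_sum_decomp]
  simp only [ew_mp_zero, ew_mp_succ, ew_total_zero]
  have h : ∀ (p : Fin n) (e : Equiv.Perm (Fin n)), ¬ (Function.minimalPeriod e p + 1 = 1) := by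
    intro p e
    have := ew_mp_pos e p
    omega
  simp [ewG, Finset.mul_sum, pow_succ, (ew_mp_pos _ _).ne', mul_comm]

theorem ewF_succ_succ (θ : ℝ) (n j : ℕ) (hj : 1 ≤ j) :
    ewF θ (n+1) (j+1) = (n+1) * ewF θ n j := by
  rw [ewF_succ, ew_sum_decomp]
  simp only [ew_mp_zero, ew_mp_succ, ew_total_zero, ew_total_succ]
  have : j ≠ 0 := by omega
  simp [this, ewF]

theorem ew_Psi_succ (θ : ℝ) (n j : ℕ) :
    Psi θ (n+1) (j+1) = Psi θ n j * ((n+1) / (θ + n)) := by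
  unfold Psi
  rw [Finset.prod_range_succ']
  congr 1
  · apply Finset.prod_congr rfl
    intro i _
    push_cast
    congr 1 <;> ring
  · push_cast
    congr 1 <;> ring

theorem ewF_eq (θ : ℝ) (hθ : 0 < θ) (n j : ℕ) (hj : 1 ≤ j) :
    ewF θ n j = θ * Psi θ n j * ewG θ n := by
  induction n generalizing j with
  | zero =>
    have : Psi θ 0 j = 0 := by
      unfold Psi
      apply Finset.prod_eq_zero (i := 0) (by simp; omega)
      simp
    simp [ewF, this]
  | succ n ih =>
    have hne : θ + n ≠ 0 := by positivity
    obtain ⟨k, rfl⟩ : ∃ k, j = k + 1 := ⟨j - 1, by omega⟩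
    rw [ew_Psi_succ, ewG_succ]
    rcases Nat.eq_zero_or_pos k with rfl | hk
    · rw [ewF_one]
      simp [Psi]
      field_simp
    · rw [ewF_succ_succ θ n k hk, ih k hk]
      field_simp

theorem ew_Psi_sum (θ : ℝ) (hθ : 0 < θ) (n : ℕ) :
    θ * ∑ j ∈ Finset.Icc 1 n, Psi θ n j = n := by
  have h : ∀ n : ℕ, θ * ∑ j ∈ Finset.range n, Psi θ n (j+1) = n := by
    intro n
    induction n with
    | zero => simp
    | succ n ih =>
      have hne : θ + n ≠ 0 := by positivity
      simp only [ew_Psi_succ]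
      rw [← Finset.sum_mul, Finset.sum_range_succ', ← mul_assoc, mul_add, ih]
      simp [Psi]
      field_simp
      ring
  rw [← h n, Finset.range_eq_Ico, Finset.sum_Ico_add' (fun j => Psi θ n j) 0 n 1]
  rfl

theorem ew_expect (θ : ℝ) (hθ : 0 < θ) (N j : ℕ) (hj : 1 ≤ j) :
    ∑ σ : Equiv.Perm (Fin N), ewens θ N σ * (cycleCount N σ j : ℝ) = θ * Psi θ N j / j := by
  have hj0 : (j : ℝ) ≠ 0 := by positivity
  have hG : ewG θ N ≠ 0 := by
    rw [ewG_eq]; apply Finset.prod_ne_zero_iff.2; intro i _; positivity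
  have hF := ewF_eq θ hθ N j hj
  have hF2 : ewF θ N j = j * ∑ σ : Equiv.Perm (Fin N),
      θ ^ totalCycles N σ * (cycleCount N σ j : ℝ) := by
    unfold ewF
    rw [Finset.sum_comm, Finset.mul_sum]
    apply Finset.sum_congr rfl
    intro σ _
    have hc : (j : ℝ) * (cycleCount N σ j : ℝ)
        = (#{x : Fin N | Function.minimalPeriod σ x = j} : ℝ) := by
      exact_mod_cast ew_count σ j hj
    rw [← Finset.sum_filter, Finset.sum_const, nsmul_eq_mul, ← hc]
    ring
  rw [hF2] at hF
  unfold ewens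
  rw [← ewG_eq]
  have : ∀ σ : Equiv.Perm (Fin N), θ ^ totalCycles N σ / ewG θ N * (cycleCount N σ j : ℝ)
      = θ ^ totalCycles N σ * (cycleCount N σ j : ℝ) / ewG θ N := fun σ => by ring
  rw [Finset.sum_congr rfl (fun σ _ => this σ), ← Finset.sum_div]
  field_simp
  linarith

/-- The expectation of `X_N^I` under the Ewens measure of parameter `θ` equals
`N(β − α) − θ ∑_{j=1}^N (Ψ_N(j)/j)({jβ} − {jα})`. -/
theorem stmt_7 (θ : ℝ) (hθ : 0 < θ) (N : ℕ) (hN : 1 ≤ N) (α β : ℝ)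
    (hα0 : 0 ≤ α) (hα1 : α < 1) (hαβ : α < β) (hβ : β ≤ α + 1) :
    ∑ σ : Equiv.Perm (Fin N), ewens θ N σ * XNI N α β σ
      = (N : ℝ) * (β - α)
        - θ * ∑ j ∈ Finset.Icc 1 N,
            Psi θ N j / (j : ℝ) * (Int.fract ((j : ℝ) * β) - Int.fract ((j : ℝ) * α)) := by
  have h1 : ∑ σ : Equiv.Perm (Fin N), ewens θ N σ * XNI N α β σ
      = ∑ j ∈ Finset.Icc 1 N, (θ * Psi θ N j / j) *
          ((⌊(j : ℝ) * β⌋ : ℝ) - (⌊(j : ℝ) * α⌋ : ℝ)) := by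
    unfold XNI
    simp only [Finset.mul_sum]
    rw [Finset.sum_comm]
    apply Finset.sum_congr rfl
    intro j hj
    rw [← ew_expect θ hθ N j (Finset.mem_Icc.1 hj).1, Finset.sum_mul]
    apply Finset.sum_congr rfl
    intro σ _
    ring
  rw [h1, ← ew_Psi_sum θ hθ N, mul_assoc, ← mul_sub, Finset.sum_mul, ← Finset.sum_sub_distrib,
    Finset.mul_sum]
  apply Finset.sum_congr rfl
  intro j hj
  have hj0 : (j : ℝ) ≠ 0 := by
    have := (Finset.mem_Icc.1 hj).1
    positivity
  simp only [Int.fract]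
  field_simp
  ring
end

section
/- Let θ > 0 and let (δ_N)_{N≥1} be a sequence of real numbers in (0,1] such that δ_N → 0 and Nδ_N → +∞ as N → ∞. Then ∑_{j=1}^N (Ψ_N(j)/j) {jδ_N}(1 − {jδ_N}) is asymptotically equivalent to (1/6) log(Nδ_N) as N → ∞; that is, the ratio of the sum to log(Nδ_N) tends to 1/6. -/
open Filter Finset

namespace S11

noncomputable def g (x : ℝ) : ℝ := Int.fract x * (1 - Int.fract x)
noncomputable def G (x : ℝ) : ℝ :=
  (Int.fract x ^ 3 - 3 / 2 * Int.fract x ^ 2 + Int.fract x / 2) / 3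

lemma g_nonneg (x : ℝ) : 0 ≤ g x :=
  mul_nonneg (Int.fract_nonneg x) (by linarith [Int.fract_lt_one x])

lemma g_le_one (x : ℝ) : g x ≤ 1 := by
  have := Int.fract_nonneg x
  have := Int.fract_lt_one x
  unfold g; nlinarith

lemma g_le_self {x : ℝ} (hx : 0 ≤ x) : g x ≤ x := by
  have h1 := Int.fract_nonneg x
  have h2 : Int.fract x ≤ x := by
    have := Int.self_sub_floor x
    have h3 : (0 : ℝ) ≤ ⌊x⌋ := by exact_mod_cast Int.floor_nonneg.2 hx
    linarith
  unfold g; nlinarith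

lemma G_abs (x : ℝ) : |G x| ≤ 1 := by
  have h1 := Int.fract_nonneg x
  have h2 := Int.fract_lt_one x
  unfold G
  generalize Int.fract x = u at *
  have h3 : 0 ≤ u ^ 2 := by positivity
  have h4 : 0 ≤ u ^ 3 := by positivity
  have h5 : u ^ 2 ≤ 1 := by nlinarith
  have h6 : u ^ 3 ≤ 1 := by nlinarith
  rw [abs_le]; constructor <;> linarith

lemma G_step (x d : ℝ) (hd : 0 < d) (hd1 : d ≤ 1) :
    |G (x + d) - G x - d * (1 / 6 - g x)| ≤ 2 * d ^ 2 := by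
  have h1 := Int.fract_nonneg x
  have h2 := Int.fract_lt_one x
  have hx : (⌊x⌋ : ℝ) + Int.fract x = x := Int.floor_add_fract x
  have hd2 : 0 ≤ d ^ 2 := by positivity
  by_cases hc : Int.fract x + d < 1
  · have hf : Int.fract (x + d) = Int.fract x + d := by
      rw [Int.fract_eq_iff]
      refine ⟨by linarith, hc, ⌊x⌋, by linarith⟩
    unfold G g
    rw [hf]
    generalize Int.fract x = u at *
    have : ((u + d) ^ 3 - 3 / 2 * (u + d) ^ 2 + (u + d) / 2) / 3 - (u ^ 3 - 3 / 2 * u ^ 2 + u / 2) / 3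
      - d * (1 / 6 - u * (1 - u)) = d ^ 2 * (u - 1 / 2 + d / 3) := by ring
    rw [this, abs_le]
    constructor <;> nlinarith
  · push Not at hc
    by_cases hc2 : Int.fract x + d - 1 < 1
    · have hf : Int.fract (x + d) = Int.fract x + d - 1 := by
        rw [Int.fract_eq_iff]
        refine ⟨by linarith, by linarith, ⌊x⌋ + 1, by push_cast; linarith⟩
      unfold G g
      rw [hf]
      generalize Int.fract x = u at *
      have : ((u + d - 1) ^ 3 - 3 / 2 * (u + d - 1) ^ 2 + (u + d - 1) / 2) / 3
        - (u ^ 3 - 3 / 2 * u ^ 2 + u / 2) / 3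
        - d * (1 / 6 - u * (1 - u)) = d ^ 2 * (u - 1 / 2 + d / 3) - (u + d - 1) ^ 2 := by ring
      have h3 : (u + d - 1) ^ 2 ≤ d ^ 2 := by
        apply pow_le_pow_left₀ <;> linarith
      have h4 : 0 ≤ (u + d - 1) ^ 2 := by positivity
      rw [this, abs_le]
      constructor <;> nlinarith
    · exfalso; linarith

lemma harm (M n : ℕ) (hM : 1 ≤ M) (hn : M ≤ n) :
    Real.log n - Real.log M ≤ ∑ j ∈ Ico M n, 1 / (j : ℝ) ∧
    ∑ j ∈ Ico M n, 1 / (j : ℝ) ≤ Real.log n - Real.log M + 1 / M - 1 / n := by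
  induction n, hn using Nat.le_induction with
  | base => simp
  | succ k hk ih =>
    rw [sum_Ico_succ_top hk]
    have hk0 : (0 : ℝ) < k := by exact_mod_cast (by omega : 0 < k)
    have hk1 : (0 : ℝ) < (k : ℝ) + 1 := by positivity
    have e1 : Real.log ((k : ℝ) + 1) - Real.log k ≤ 1 / k := by
      rw [← Real.log_div hk1.ne' hk0.ne']
      have := Real.log_le_sub_one_of_pos (div_pos hk1 hk0)
      have e : ((k : ℝ) + 1) / k - 1 = 1 / k := by field_simp; ring
      linarith
    have e2 : 1 / ((k : ℝ) + 1) ≤ Real.log ((k : ℝ) + 1) - Real.log k := by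
      have := Real.log_le_sub_one_of_pos (div_pos hk0 hk1)
      rw [Real.log_div hk0.ne' hk1.ne'] at this
      have e : (k : ℝ) / (k + 1) - 1 = - (1 / ((k : ℝ) + 1)) := by field_simp; ring
      linarith
    push_cast
    constructor <;> linarith [ih.1, ih.2]

lemma bsum (d : ℝ) (hd : 0 < d) (hd1 : d ≤ 1) (M n : ℕ) (hM : 1 ≤ M) (hn : M ≤ n) :
    |∑ j ∈ Ico M n, (1 / 6 - g (j * d)) / (j : ℝ) - (G (n * d) / (d * n) - G (M * d) / (d * M))|
      ≤ (1 / d) * (1 / M - 1 / n) + 2 * d * ∑ j ∈ Ico M n, 1 / (j : ℝ) := by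
  induction n, hn using Nat.le_induction with
  | base => simp
  | succ k hk ih =>
    rw [sum_Ico_succ_top hk, sum_Ico_succ_top hk]
    have hk0 : (0 : ℝ) < k := by exact_mod_cast (by omega : 0 < k)
    have hk1 : (0 : ℝ) < (k : ℝ) + 1 := by positivity
    have hs := G_step (k * d) d hd hd1
    have hx : (k : ℝ) * d + d = ((k + 1 : ℕ) : ℝ) * d := by push_cast; ring
    rw [hx] at hs
    have hG := G_abs (((k + 1 : ℕ) : ℝ) * d)
    generalize G (((k + 1 : ℕ) : ℝ) * d) = G1 at *
    generalize G ((k : ℝ) * d) = G0 at *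
    generalize g ((k : ℝ) * d) = g0 at *
    push_cast
    have step : |(1 / 6 - g0) / (k : ℝ) - (G1 / (d * (k + 1)) - G0 / (d * k))|
        ≤ (1 / d) * (1 / k - 1 / (k + 1)) + 2 * d * (1 / k) := by
      have e : (1 / 6 - g0) / (k : ℝ) - (G1 / (d * (k + 1)) - G0 / (d * k))
        = G1 * ((1 / d) * (1 / k - 1 / (k + 1))) - (G1 - G0 - d * (1 / 6 - g0)) * (1 / (d * k)) := by
        field_simp; ring
      have p1 : 0 ≤ (1 / d) * (1 / (k : ℝ) - 1 / (k + 1)) := by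
        have : 1 / ((k : ℝ) + 1) ≤ 1 / k := one_div_le_one_div_of_le hk0 (by linarith)
        exact mul_nonneg (by positivity) (by linarith)
      have p2 : 0 ≤ 1 / (d * (k : ℝ)) := by positivity
      rw [e]
      refine (abs_sub _ _).trans ?_
      rw [abs_mul G1, abs_of_nonneg p1, abs_mul, abs_of_nonneg p2]
      have q1 := mul_le_mul_of_nonneg_right hG p1
      have q2 := mul_le_mul_of_nonneg_right hs p2
      have e2 : 2 * d ^ 2 * (1 / (d * (k : ℝ))) = 2 * d * (1 / k) := by field_simp
      linarith
    rw [abs_le] at *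
    constructor <;> linarith [ih.1, ih.2, step.1, step.2]

lemma Tsum (d : ℝ) (hd : 0 < d) (hd1 : d ≤ 1) (N : ℕ) (hN : 1 ≤ N * d) :
    |∑ j ∈ Icc 1 N, g (j * d) / (j : ℝ) - 1 / 6 * Real.log (N * d)|
      ≤ 10 + 2 * d * Real.log (N * d) := by
  set M := ⌈1 / d⌉₊ with hMdef
  have h1d : 1 ≤ 1 / d := by rw [le_div_iff₀ hd]; linarith
  have hM1 : 1 / d ≤ M := Nat.le_ceil _
  have hM2 : (M : ℝ) < 1 / d + 1 := Nat.ceil_lt_add_one (by positivity)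
  have hM : 1 ≤ M := by exact_mod_cast h1d.trans hM1
  have hMN : M ≤ N := by
    apply Nat.ceil_le.2; rw [div_le_iff₀ hd]; exact hN
  have hM0 : (0 : ℝ) < M := by exact_mod_cast hM
  have hN0 : (0 : ℝ) < N := by exact_mod_cast (by omega : 0 < N)
  have hsplit : ∑ j ∈ Icc 1 N, g (j * d) / (j : ℝ) =
      ∑ j ∈ Ico 1 M, g (j * d) / (j : ℝ) + ∑ j ∈ Ico M N, g (j * d) / (j : ℝ) + g (N * d) / N := by
    have : Icc 1 N = Ico 1 (N + 1) := by ext; simp [Nat.lt_succ_iff]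
    rw [this, sum_Ico_succ_top (by omega), sum_Ico_consecutive _ hM hMN]
  have hhead0 : 0 ≤ ∑ j ∈ Ico 1 M, g (j * d) / (j : ℝ) :=
    sum_nonneg fun j _ => div_nonneg (g_nonneg _) (by positivity)
  have hMd : 1 ≤ M * d := by rwa [div_le_iff₀ hd] at hM1
  have hMd2 : M * d < 1 + d := by
    have := mul_lt_mul_of_pos_right hM2 hd
    have e : (1 / d + 1) * d = 1 + d := by field_simp
    linarith
  have hhead1 : ∑ j ∈ Ico 1 M, g (j * d) / (j : ℝ) ≤ 1 := by
    have : ∑ j ∈ Ico 1 M, g (j * d) / (j : ℝ) ≤ ∑ j ∈ Ico 1 M, d := by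
      apply sum_le_sum
      intro j hj
      have hj0 : (0 : ℝ) < j := by exact_mod_cast (Finset.mem_Ico.1 hj).1
      rw [div_le_iff₀ hj0]
      have := g_le_self (x := j * d) (by positivity)
      linarith
    rw [sum_const, Nat.card_Ico, nsmul_eq_mul, Nat.cast_sub hM] at this
    push_cast at this
    linarith
  have hlast0 : 0 ≤ g (N * d) / N := div_nonneg (g_nonneg _) hN0.le
  have hlast1 : g (N * d) / N ≤ 1 := by
    rw [div_le_iff₀ hN0]
    have : (1 : ℝ) ≤ N := by exact_mod_cast hM.trans hMN
    linarith [g_le_one (N * d)]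
  obtain ⟨hH1, hH2⟩ := harm M N hM hMN
  have hb := bsum d hd hd1 M N hM hMN
  set H := ∑ j ∈ Ico M N, 1 / (j : ℝ) with hH
  have hsum : ∑ j ∈ Ico M N, (1 / 6 - g (j * d)) / (j : ℝ)
      = 1 / 6 * H - ∑ j ∈ Ico M N, g (j * d) / (j : ℝ) := by
    rw [hH, mul_sum, ← sum_sub_distrib]
    apply sum_congr rfl; intros; ring
  rw [hsum] at hb
  have hl1 : Real.log (N * d) = Real.log N + Real.log d := Real.log_mul hN0.ne' hd.ne'
  have hl2 : Real.log (M * d) = Real.log M + Real.log d := Real.log_mul hM0.ne' hd.ne'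
  have hl3 : 0 ≤ Real.log (M * d) := Real.log_nonneg hMd
  have hl4 : Real.log (M * d) ≤ 1 := by
    have := Real.log_le_sub_one_of_pos (by linarith : 0 < M * d); linarith
  have hMinv : 1 / (M : ℝ) ≤ 1 := by rw [div_le_iff₀ hM0, one_mul]; exact_mod_cast hM
  have hNinv : 0 ≤ 1 / (N : ℝ) := by positivity
  have hGM : |G (M * d) / (d * M)| ≤ 1 := by
    rw [abs_div, abs_of_pos (by positivity : 0 < d * M), div_le_iff₀ (by positivity)]
    linarith [G_abs (M * d)]
  have hGN : |G (N * d) / (d * N)| ≤ 1 := by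
    rw [abs_div, abs_of_pos (by positivity : 0 < d * N), div_le_iff₀ (by positivity)]
    linarith [G_abs (N * d)]
  have hx : (1 / d) * (1 / (M : ℝ) - 1 / N) ≤ 1 := by
    rw [div_mul_eq_mul_div, div_le_iff₀ hd, one_mul, one_mul]
    have : 1 / (M : ℝ) ≤ d := by rw [div_le_iff₀ hM0]; linarith
    linarith
  have hdH : 2 * d * H ≤ 2 * d * Real.log (N * d) + 2 := by
    have : H ≤ Real.log (N * d) + 1 := by linarith
    have := mul_le_mul_of_nonneg_left this (by positivity : 0 ≤ 2 * d)
    linarith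
  rw [hsplit]
  rw [abs_le] at *
  constructor <;> linarith [hb.1, hb.2, hGM.1, hGM.2, hGN.1, hGN.2]

lemma Psi_succ (θ : ℝ) (N j : ℕ) :
    Psi θ N (j + 1) = Psi θ N j * (((N : ℝ) - j) / (θ + N - 1 - j)) := by
  unfold Psi; rw [prod_range_succ]

lemma den_pos {θ : ℝ} (hθ : 0 < θ) {N j : ℕ} (hj : j < N) : 0 < θ + (N : ℝ) - 1 - j := by
  have : (j : ℝ) + 1 ≤ N := by exact_mod_cast hj
  linarith

lemma num_pos {N j : ℕ} (hj : j < N) : 0 < (N : ℝ) - j := by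
  have : (j : ℝ) + 1 ≤ N := by exact_mod_cast hj
  linarith

lemma Psi_nonneg {θ : ℝ} (hθ : 0 < θ) {N j : ℕ} (hj : j ≤ N) : 0 ≤ Psi θ N j := by
  apply prod_nonneg
  intro i hi
  have hi : i < N := by have := Finset.mem_range.1 hi; omega
  exact div_nonneg (num_pos hi).le (den_pos hθ hi).le

lemma Psi_tel {θ : ℝ} (hθ : 0 < θ) {N : ℕ} (j : ℕ) (hj : j ≤ N) :
    θ * ∑ i ∈ range j, Psi θ N (i + 1) = N - Psi θ N j * (N - j) := by
  induction j with
  | zero => simp [Psi]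
  | succ k ih =>
    rw [sum_range_succ, mul_add, ih (by omega)]
    have hd := den_pos hθ (show k < N by omega)
    have : Psi θ N (k + 1) * (θ + N - 1 - k) = Psi θ N k * (N - k) := by
      rw [Psi_succ, mul_assoc, div_mul_cancel₀ _ hd.ne']
    push_cast
    linarith

lemma Psi_mono {θ : ℝ} (hθ : 0 < θ) {N j i : ℕ} (hj : j ≤ N) (hi : i ≤ j) :
    Psi θ N i ≤ 1 + Psi θ N j := by
  rcases le_total 1 θ with h | h
  · have : Psi θ N i ≤ 1 := by
      apply prod_le_one
      · intro k hk
        have hk : k < N := by have := Finset.mem_range.1 hk; omega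
        exact div_nonneg (num_pos hk).le (den_pos hθ hk).le
      · intro k hk
        have hk : k < N := by have := Finset.mem_range.1 hk; omega
        rw [div_le_one (den_pos hθ hk)]; linarith
    linarith [Psi_nonneg hθ hj]
  · have : Psi θ N i ≤ Psi θ N j := by
      induction j, hi using Nat.le_induction with
      | base => exact le_rfl
      | succ k hk ih =>
        refine (ih (by omega)).trans ?_
        rw [Psi_succ]
        apply le_mul_of_one_le_right (Psi_nonneg hθ (by omega))
        rw [one_le_div (den_pos hθ (by omega))]; linarith
    linarith

lemma Psi_diff {θ : ℝ} (hθ : 0 < θ) {N j : ℕ} (hj1 : 1 ≤ j) (hj : j ≤ N) :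
    |Psi θ N j / j - 1 / j| ≤ (Psi θ N j * (1 + θ) + θ) / N := by
  have hj0 : (0 : ℝ) < j := by exact_mod_cast hj1
  have hN0 : (0 : ℝ) < N := by exact_mod_cast (by omega : 0 < N)
  have ht := Psi_tel hθ j hj
  have hp := Psi_nonneg hθ hj
  have hs : ∑ i ∈ range j, Psi θ N (i + 1) ≤ j * (1 + Psi θ N j) := by
    have : ∑ i ∈ range j, Psi θ N (i + 1) ≤ ∑ i ∈ range j, (1 + Psi θ N j) := by
      apply sum_le_sum; intro i hi
      exact Psi_mono hθ hj (by have := Finset.mem_range.1 hi; omega)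
    simpa [mul_add] using this
  have hs0 : 0 ≤ ∑ i ∈ range j, Psi θ N (i + 1) := by
    apply sum_nonneg; intro i hi
    exact Psi_nonneg hθ (by have := Finset.mem_range.1 hi; omega)
  set s := ∑ i ∈ range j, Psi θ N (i + 1)
  have e : Psi θ N j / j - 1 / j = (Psi θ N j - θ * s / j) / N := by
    rw [ht]; field_simp; ring
  rw [e, abs_div, abs_of_pos hN0]
  apply div_le_div_of_nonneg_right _ hN0.le
  have h1 : θ * s / j ≤ θ * (1 + Psi θ N j) := by
    rw [div_le_iff₀ hj0]
    have := mul_le_mul_of_nonneg_left hs hθ.le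
    linarith
  have h2 : 0 ≤ θ * s / j := by positivity
  have h3 := mul_nonneg hθ.le hp
  rw [abs_le]; constructor <;> linarith

lemma Sdiff {θ : ℝ} (hθ : 0 < θ) (d : ℝ) {N : ℕ} (hN : 1 ≤ N) :
    |∑ j ∈ Icc 1 N, Psi θ N j / j * g (j * d) - ∑ j ∈ Icc 1 N, g (j * d) / (j : ℝ)|
      ≤ (1 + θ) / θ + θ := by
  have hN0 : (0 : ℝ) < N := by exact_mod_cast hN
  have ht := Psi_tel hθ N le_rfl
  rw [sub_self, mul_zero, sub_zero] at ht
  have hS : ∑ j ∈ Icc 1 N, Psi θ N j = N / θ := by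
    rw [eq_div_iff hθ.ne', ← ht, mul_comm]
    congr 1
    rw [range_eq_Ico, sum_Ico_add' (fun i => Psi θ N i) 0 N 1]
    rfl
  rw [← sum_sub_distrib]
  refine (abs_sum_le_sum_abs _ _).trans ?_
  have : ∑ j ∈ Icc 1 N, |Psi θ N j / j * g (j * d) - g (j * d) / (j : ℝ)|
      ≤ ∑ j ∈ Icc 1 N, (Psi θ N j * (1 + θ) + θ) / N := by
    apply sum_le_sum; intro j hj
    obtain ⟨h1, h2⟩ := Finset.mem_Icc.1 hj
    have e : Psi θ N j / j * g (j * d) - g (j * d) / (j : ℝ)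
      = (Psi θ N j / j - 1 / j) * g (j * d) := by ring
    rw [e, abs_mul, abs_of_nonneg (g_nonneg _)]
    exact (mul_le_of_le_one_right (abs_nonneg _) (g_le_one _)).trans (Psi_diff hθ h1 h2)
  refine this.trans (le_of_eq ?_)
  rw [← sum_div, sum_add_distrib, ← sum_mul, hS]
  simp
  field_simp

end S11

/-- If `δ_N ∈ (0,1]`, `δ_N → 0` and `Nδ_N → ∞`, then
`∑_{j=1}^N (Ψ_N(j)/j) {jδ_N}(1 − {jδ_N}) ∼ (1/6) log(Nδ_N)`. -/
theorem stmt_11 (θ : ℝ) (hθ : 0 < θ) (δ : ℕ → ℝ)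
    (hδ0 : ∀ N, 1 ≤ N → 0 < δ N) (hδ1 : ∀ N, 1 ≤ N → δ N ≤ 1)
    (hlim0 : Tendsto δ atTop (nhds 0))
    (hliminf : Tendsto (fun N : ℕ => (N : ℝ) * δ N) atTop atTop) :
    Tendsto
      (fun N : ℕ =>
        (∑ j ∈ Finset.Icc 1 N,
          Psi θ N j / (j : ℝ) *
            (Int.fract ((j : ℝ) * δ N) * (1 - Int.fract ((j : ℝ) * δ N))))
        / Real.log ((N : ℝ) * δ N))
      atTop (nhds (1 / 6)) := by
  have hL : Tendsto (fun N : ℕ => Real.log ((N : ℝ) * δ N)) atTop atTop :=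
    Real.tendsto_log_atTop.comp hliminf
  set C : ℝ := (1 + θ) / θ + θ + 10 with hC
  have hlim : Tendsto (fun N : ℕ => C / Real.log ((N : ℝ) * δ N) + 2 * δ N) atTop (nhds 0) := by
    have h1 := hL.const_div_atTop C
    have h2 := hlim0.const_mul 2
    simpa using h1.add h2
  rw [tendsto_iff_norm_sub_tendsto_zero]
  refine squeeze_zero' (Eventually.of_forall fun _ => norm_nonneg _) ?_ hlim
  filter_upwards [hliminf.eventually_ge_atTop 1, hL.eventually_gt_atTop 0, eventually_ge_atTop 1]
    with N h1 hpos hN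
  have hA := S11.Sdiff hθ (δ N) hN
  have hB := S11.Tsum (δ N) (hδ0 N hN) (hδ1 N hN) N h1
  change ‖(∑ j ∈ Finset.Icc 1 N, Psi θ N j / (j : ℝ) * S11.g (j * δ N)) / Real.log ((N : ℝ) * δ N)
    - 1 / 6‖ ≤ _
  set L := Real.log ((N : ℝ) * δ N)
  set S := ∑ j ∈ Finset.Icc 1 N, Psi θ N j / (j : ℝ) * S11.g (j * δ N)
  have e : S / L - 1 / 6 = (S - 1 / 6 * L) / L := by field_simp
  have e2 : C / L + 2 * δ N = (C + 2 * δ N * L) / L := by field_simp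
  rw [e, e2, Real.norm_eq_abs, abs_div, abs_of_pos hpos]
  apply div_le_div_of_nonneg_right _ hpos.le
  rw [abs_le] at *
  constructor <;> linarith [hA.1, hA.2, hB.1, hB.2]
end

section
/- Let t be an irrational real number, let (ε_n)_{n≥1} be a sequence of positive real numbers converging to 0, and let f be a real-valued continuous function on [0,1]. Then ε_n ∑_{j=1}^{⌈1/ε_n⌉ − 1} f(jε_n) · 1_{jε_n ≥ 1 − {jt}} converges as n → ∞ to ∫₀¹ x f(x) dx, where 1_{jε_n ≥ 1 − {jt}} equals 1 if jε_n ≥ 1 − {jt} and 0 otherwise. -/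
open Filter Finset

lemma perm_sum (q : ℕ) (hq : 0 < q) (p m : ℤ) (hp : IsCoprime p (q : ℤ)) :
    ∑ i ∈ range q, (((m + i * p) % q : ℤ) : ℝ) = ∑ i ∈ range q, (i : ℝ) := by
  have hq' : (0 : ℤ) < q := by exact_mod_cast hq
  have hinj : Set.InjOn (fun i : ℕ => ((m + i * p) % q : ℤ).toNat) (range q) := by
    intro a ha b hb hab
    simp only [coe_range, Set.mem_Iio] at ha hb
    have h1 := Int.emod_nonneg (m + a * p) hq'.ne'
    have h2 := Int.emod_nonneg (m + b * p) hq'.ne'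
    have h3 : (m + a * p) % q = (m + b * p) % (q : ℤ) := by
      simp only at hab
      omega
    have h4 : (q : ℤ) ∣ (a - b) * p := by
      have h5 := Int.ModEq.dvd (show Int.ModEq q (m + b * p) (m + a * p) from h3.symm)
      convert h5 using 1; ring
    have h6 := hp.symm.dvd_of_dvd_mul_right h4
    have h7 := Int.eq_zero_of_abs_lt_dvd h6 (by rw [abs_lt]; constructor <;> omega)
    omega
  have himg : (range q).image (fun i : ℕ => ((m + i * p) % q : ℤ).toNat) = range q := by
    apply Finset.eq_of_subset_of_card_le
    · intro x hx
      simp only [Finset.mem_image, Finset.mem_range] at hx ⊢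
      obtain ⟨i, hi, rfl⟩ := hx
      have h1 := Int.emod_nonneg (m + i * p) hq'.ne'
      have h2 := Int.emod_lt_of_pos (m + i * p) hq'
      omega
    · rw [Finset.card_image_of_injOn hinj]
  conv_rhs => rw [← himg]
  rw [Finset.sum_image hinj]
  apply Finset.sum_congr rfl
  intro i hi
  have h1 := Int.emod_nonneg (m + i * p) hq'.ne'
  exact_mod_cast congrArg (Int.cast (R := ℝ)) (Int.toNat_of_nonneg h1).symm

lemma fract_block (q : ℕ) (hq : 0 < q) (p : ℤ) (hp : IsCoprime p (q : ℤ)) (x : ℝ) :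
    ∑ i ∈ range q, (Int.fract (x + i * (p / q : ℝ)) - 1 / 2) = Int.fract (q * x) - 1 / 2 := by
  have hq' : (0 : ℤ) < q := by exact_mod_cast hq
  have hqr : (0 : ℝ) < q := by exact_mod_cast hq
  have key : ∀ i ∈ range q, Int.fract (x + i * (p / q : ℝ)) - 1 / 2
      = (((⌊q * x⌋ + i * p) % q : ℤ) : ℝ) / q + (Int.fract (q * x) / q - 1 / 2) := by
    intro i hi
    set m := ⌊(q : ℝ) * x⌋ with hm
    have h1 := Int.emod_nonneg (m + i * p) hq'.ne'
    have h2 := Int.emod_lt_of_pos (m + i * p) hq'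
    have h3 := Int.emod_add_mul_ediv (m + i * p) q
    have f0 := Int.fract_nonneg ((q : ℝ) * x)
    have f1 := Int.fract_lt_one ((q : ℝ) * x)
    have hfl := Int.floor_add_fract ((q : ℝ) * x)
    rw [← hm] at hfl
    set r := (m + i * p) % (q : ℤ)
    set d := (m + i * p) / (q : ℤ)
    have h1' : (0 : ℝ) ≤ r := by exact_mod_cast h1
    have h2' : (r : ℝ) + 1 ≤ q := by exact_mod_cast h2
    have h3' : (r : ℝ) + q * d = m + i * p := by exact_mod_cast h3
    have : Int.fract (x + i * (p / q : ℝ)) = (r : ℝ) / q + Int.fract (q * x) / q := by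
      rw [Int.fract_eq_iff]
      refine ⟨by positivity, ?_, d, ?_⟩
      · rw [← add_div, div_lt_one hqr]; linarith
      · have hx : x = (m + Int.fract (q * x)) / q := by rw [hfl]; field_simp
        have hd : (d : ℝ) = (m + i * p - r) / q := by rw [← h3']; field_simp; ring
        rw [hd]
        nth_rw 1 [hx]
        ring
    rw [this]; ring
  rw [Finset.sum_congr rfl key, Finset.sum_add_distrib, ← Finset.sum_div, perm_sum q hq p _ hp]
  have : ∀ n : ℕ, ∑ i ∈ range n, (i : ℝ) = n * (n - 1) / 2 := by
    intro n
    induction n with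
    | zero => simp
    | succ k ih => rw [Finset.sum_range_succ, ih]; push_cast; ring
  rw [this]
  simp
  field_simp
  ring

lemma block_bound (q : ℕ) (hq : 0 < q) (p : ℤ) (hp : IsCoprime p (q : ℤ)) (x s : ℝ)
    (hs : |s - p / q| ≤ 1 / (q : ℝ) ^ 2) :
    |∑ i ∈ range q, (Int.fract (x + i * s) - 1 / 2)| ≤ 5 / 2 := by
  have hqr : (0 : ℝ) < q := by exact_mod_cast hq
  have hsm : ∀ i ∈ range q, |i * s - i * (p / q : ℝ)| ≤ 1 / q := by
    intro i hi
    have hi' : (i : ℝ) ≤ q := by exact_mod_cast (Finset.mem_range.1 hi).le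
    rw [← mul_sub, abs_mul, Nat.abs_cast]
    calc (i : ℝ) * |s - p / q| ≤ q * (1 / (q : ℝ) ^ 2) := by gcongr
      _ = 1 / q := by field_simp
  have e1 : ∀ y z w : ℝ, y ≤ z → z - y ≤ w → Int.fract z ≤ Int.fract y + w := by
    intro y z w h h'
    have : (⌊y⌋ : ℝ) ≤ ⌊z⌋ := by exact_mod_cast Int.floor_le_floor h
    unfold Int.fract; linarith
  have c : ∑ i ∈ range q, (2 / q : ℝ) = 2 := by simp; field_simp
  rw [abs_le]
  constructor
  · have hb := fract_block q hq p hp (x + 1 / q)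
    have f0 := Int.fract_nonneg ((q : ℝ) * (x + 1 / q))
    have : ∑ i ∈ range q, (Int.fract (x + 1 / q + i * (p / q : ℝ)) - 1 / 2)
        ≤ ∑ i ∈ range q, ((Int.fract (x + i * s) - 1 / 2) + 2 / q) := by
      apply Finset.sum_le_sum
      intro i hi
      have := abs_le.1 (hsm i hi)
      have := e1 (x + i * s) (x + 1 / q + i * (p / q : ℝ)) (2 / q) (by linarith)
        (by have : (2 : ℝ) / q = 1 / q + 1 / q := by ring
            linarith)
      linarith
    rw [Finset.sum_add_distrib, c] at this
    linarith
  · have hb := fract_block q hq p hp (x - 1 / q)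
    have f0 := Int.fract_lt_one ((q : ℝ) * (x - 1 / q))
    have : ∑ i ∈ range q, (Int.fract (x + i * s) - 1 / 2)
        ≤ ∑ i ∈ range q, ((Int.fract (x - 1 / q + i * (p / q : ℝ)) - 1 / 2) + 2 / q) := by
      apply Finset.sum_le_sum
      intro i hi
      have := abs_le.1 (hsm i hi)
      have := e1 (x - 1 / q + i * (p / q : ℝ)) (x + i * s) (2 / q) (by linarith)
        (by have : (2 : ℝ) / q = 1 / q + 1 / q := by ring
            linarith)
      linarith
    rw [Finset.sum_add_distrib, c] at this
    linarith

lemma sum_bound (q : ℕ) (hq : 0 < q) (g a : ℕ → ℝ) (M C η : ℝ) (hM : ∀ j, |g j| ≤ M)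
    (hη : 0 ≤ η) (hC : 0 ≤ C)
    (hg : ∀ j, ∀ i < q, |g (j + i) - g j| ≤ η) (ha : ∀ j, |a j| ≤ 1)
    (hab : ∀ j, |∑ i ∈ range q, a (j + i)| ≤ C) (N : ℕ) :
    |∑ j ∈ range N, g j * a j| ≤ N * (M * C / q + η) + q * M := by
  have hqr : (0 : ℝ) < q := by exact_mod_cast hq
  have hM0 : 0 ≤ M := (abs_nonneg _).trans (hM 0)
  induction N using Nat.strong_induction_on with
  | _ N ih =>
    rcases lt_or_ge N q with h | h
    · have h' : (N : ℝ) ≤ q := by exact_mod_cast h.le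
      calc |∑ j ∈ range N, g j * a j| ≤ ∑ j ∈ range N, |g j * a j| := Finset.abs_sum_le_sum_abs _ _
        _ ≤ ∑ j ∈ range N, M := by
            apply Finset.sum_le_sum
            intro j _
            rw [abs_mul]
            calc _ ≤ M * 1 := mul_le_mul (hM j) (ha j) (abs_nonneg _) hM0
              _ = M := mul_one M
        _ = N * M := by simp
        _ ≤ q * M := by gcongr
        _ ≤ _ := by
          have : 0 ≤ N * (M * C / q + η) := by positivity
          linarith
    · obtain ⟨k, rfl⟩ := Nat.exists_eq_add_of_le' h
      have hk := ih k (by omega)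
      rw [Finset.sum_range_add]
      have e : ∑ i ∈ range q, g (k + i) * a (k + i) =
          g k * ∑ i ∈ range q, a (k + i) + ∑ i ∈ range q, (g (k + i) - g k) * a (k + i) := by
        rw [Finset.mul_sum, ← Finset.sum_add_distrib]
        exact Finset.sum_congr rfl fun i _ => by ring
      have b1 : |g k * ∑ i ∈ range q, a (k + i)| ≤ M * C := by
        rw [abs_mul]; exact mul_le_mul (hM k) (hab k) (abs_nonneg _) hM0
      have b2 : |∑ i ∈ range q, (g (k + i) - g k) * a (k + i)| ≤ q * η := by
        calc _ ≤ ∑ i ∈ range q, |(g (k + i) - g k) * a (k + i)| := Finset.abs_sum_le_sum_abs _ _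
          _ ≤ ∑ i ∈ range q, η := by
            apply Finset.sum_le_sum
            intro i hi
            rw [abs_mul]
            calc _ ≤ η * 1 := mul_le_mul (hg k i (Finset.mem_range.1 hi)) (ha _) (abs_nonneg _) hη
              _ = η := mul_one η
          _ = q * η := by simp
      rw [e]
      have t1 := abs_add_le (∑ j ∈ range k, g j * a j) (g k * ∑ i ∈ range q, a (k + i) + ∑ i ∈ range q, (g (k + i) - g k) * a (k + i))
      have t2 := abs_add_le (g k * ∑ i ∈ range q, a (k + i)) (∑ i ∈ range q, (g (k + i) - g k) * a (k + i))
      have : ((k + q : ℕ) : ℝ) * (M * C / q + η) = k * (M * C / q + η) + (M * C + q * η) := by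
        push_cast; field_simp
      rw [this]
      linarith

lemma exists_approx (t : ℝ) (ht : Irrational t) (n : ℕ) :
    ∃ (q : ℕ) (p : ℤ), n < q ∧ IsCoprime p (q : ℤ) ∧ |t - p / q| < 1 / (q : ℝ) ^ 2 := by
  have h := ht.eventually_forall_le_dist_cast_rat_of_den_le n
  rw [Metric.eventually_nhds_iff] at h
  obtain ⟨δ, hδ, h⟩ := h
  obtain ⟨m, hm⟩ := exists_nat_one_div_lt (half_pos hδ)
  obtain ⟨r, hr, hrd⟩ := Real.exists_rat_abs_sub_le_and_den_le t (n := m + 1) (by omega)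
  have hd : (1 : ℝ) ≤ r.den := by exact_mod_cast r.den_pos
  have hrd' : (r.den : ℝ) ≤ m + 1 := by exact_mod_cast hrd
  have hm0 : (0 : ℝ) ≤ m := by positivity
  refine ⟨r.den, r.num, ?_, ?_, ?_⟩
  · by_contra hc
    have := h (y := δ / 2) (by rw [Real.dist_eq, sub_zero, abs_of_pos (half_pos hδ)]; linarith) r (by omega)
    rw [Real.dist_eq] at this
    have h2 : 1 / (((m + 1 : ℕ) + 1 : ℝ) * r.den) ≤ 1 / ((m : ℝ) + 1) := by
      apply one_div_le_one_div_of_le (by positivity)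
      push_cast
      nlinarith
    linarith
  · have := r.reduced
    rw [Int.isCoprime_iff_gcd_eq_one]
    simpa [Int.gcd, Nat.Coprime] using this
  · have e : (r.num : ℝ) / r.den = r := by exact_mod_cast r.num_div_den
    rw [e]
    refine hr.trans_lt ?_
    apply one_div_lt_one_div_of_lt (by positivity)
    push_cast
    nlinarith

lemma riemann (G : ℝ → ℝ) (hG : UniformContinuous G) (M : ℝ) (hM : ∀ x, |G x| ≤ M)
    (η : ℝ) (hη : 0 < η) : ∃ δ > 0, ∀ e, 0 < e → e < δ →
      |e * ∑ j ∈ range ⌈1 / e⌉₊, G (j * e) - ∫ x in (0 : ℝ)..1, G x| ≤ η := by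
  have hM0 : 0 ≤ M := (abs_nonneg _).trans (hM 0)
  obtain ⟨δ, hδ, h⟩ := Metric.uniformContinuous_iff.1 hG (η / 4) (by positivity)
  refine ⟨min (min δ 1) (η / (2 * (M + 1))), by positivity, ?_⟩
  intro e he hed
  have h1 : e < δ := hed.trans_le ((min_le_left _ _).trans (min_le_left _ _))
  have h2 : e < 1 := hed.trans_le ((min_le_left _ _).trans (min_le_right _ _))
  have h3 : e < η / (2 * (M + 1)) := hed.trans_le (min_le_right _ _)
  rw [lt_div_iff₀ (by positivity)] at h3
  have hint : ∀ a b, IntervalIntegrable G MeasureTheory.volume a b :=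
    fun a b => hG.continuous.intervalIntegrable a b
  set N := ⌈1 / e⌉₊
  have hN1 : 1 ≤ N * e := by
    have := Nat.le_ceil (1 / e)
    rwa [div_le_iff₀ he] at this
  have hN2 : N * e < 1 + e := by
    have := Nat.ceil_lt_add_one (a := 1 / e) (by positivity)
    calc N * e < (1 / e + 1) * e := by gcongr
      _ = 1 + e := by field_simp
  have hs := intervalIntegral.sum_integral_adjacent_intervals (f := G) (μ := MeasureTheory.volume)
    (a := fun j : ℕ => (j : ℝ) * e) (n := N) (fun k _ => hint _ _)
  have hb : |∑ j ∈ range N, (e * G (j * e) - ∫ x in ((j : ℕ) : ℝ) * e..((j + 1 : ℕ) : ℝ) * e, G x)|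
      ≤ N * (η / 4 * e) := by
    calc _ ≤ ∑ j ∈ range N, |(e * G (j * e) - ∫ x in ((j : ℕ) : ℝ) * e..((j + 1 : ℕ) : ℝ) * e, G x)| :=
          Finset.abs_sum_le_sum_abs _ _
      _ ≤ ∑ j ∈ range N, η / 4 * e := by
        apply Finset.sum_le_sum
        intro j _
        have hle : ((j : ℕ) : ℝ) * e ≤ ((j + 1 : ℕ) : ℝ) * e := by push_cast; nlinarith
        have e1 : e * G (j * e) = ∫ x in ((j : ℕ) : ℝ) * e..((j + 1 : ℕ) : ℝ) * e, G (j * e) := by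
          rw [intervalIntegral.integral_const]; push_cast; simp; left; ring
        rw [e1, ← intervalIntegral.integral_sub (by simp) (hint _ _)]
        have := intervalIntegral.norm_integral_le_of_norm_le_const (a := ((j : ℕ) : ℝ) * e)
          (b := ((j + 1 : ℕ) : ℝ) * e) (f := fun x => G (j * e) - G x) (C := η / 4) ?_
        · rw [Real.norm_eq_abs] at this
          refine this.trans (le_of_eq ?_)
          push_cast
          rw [show ((j : ℝ) + 1) * e - j * e = e by ring, abs_of_pos he]
        · intro x hx
          rw [Set.uIoc_of_le hle] at hx
          have hx1 := hx.1
          have hx2 := hx.2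
          push_cast at hx2
          rw [← dist_eq_norm]
          apply le_of_lt
          apply h
          rw [Real.dist_eq, abs_lt]
          constructor <;> linarith
      _ = N * (η / 4 * e) := by simp
  rw [Finset.sum_sub_distrib, hs, ← Finset.mul_sum] at hb
  simp only [Nat.cast_zero, zero_mul] at hb
  have hadd := intervalIntegral.integral_add_adjacent_intervals (hint 0 1) (hint 1 (N * e))
  have hr := intervalIntegral.norm_integral_le_of_norm_le_const (a := 1)
          (b := N * e) (f := G) (C := M) (fun x _ => hM x)
  rw [Real.norm_eq_abs, abs_of_nonneg (by linarith : 0 ≤ N * e - 1)] at hr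
  have hr' : M * (N * e - 1) ≤ M * e := by gcongr; linarith
  have hb' : N * (η / 4 * e) ≤ η / 2 := by nlinarith
  rw [abs_le] at *
  constructor <;> nlinarith

lemma weighted (t : ℝ) (ht : Irrational t) (G : ℝ → ℝ) (hG : UniformContinuous G) (M : ℝ)
    (hM : ∀ x, |G x| ≤ M) (η : ℝ) (hη : 0 < η) : ∃ δ > 0, ∀ e, 0 < e → e < δ →
      ∀ s, |s - t| < δ →
      |e * ∑ j ∈ range ⌈1 / e⌉₊, G (j * e) * (Int.fract (j * s) - 1 / 2)| ≤ η := by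
  have hM0 : 0 ≤ M := (abs_nonneg _).trans (hM 0)
  obtain ⟨n, hn⟩ := exists_nat_gt (20 * M / η)
  obtain ⟨q, p, hnq, hpq, hap⟩ := exists_approx t ht n
  have hq : 0 < q := by omega
  have hqr : (0 : ℝ) < q := by exact_mod_cast hq
  have hnq' : (n : ℝ) < q := by exact_mod_cast hnq
  have hMq : M * (5 / 2) / q ≤ η / 8 := by
    rw [div_lt_iff₀ hη] at hn
    rw [div_le_iff₀ hqr]
    nlinarith
  obtain ⟨δ, hδ, h⟩ := Metric.uniformContinuous_iff.1 hG (η / 8) (by positivity)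
  refine ⟨min (min (δ / q) 1) (min (η / (4 * q * (M + 1))) (1 / (q : ℝ) ^ 2 - |t - p / q|)), ?_, ?_⟩
  · have := sub_pos.2 hap
    positivity
  intro e he hed s hs
  have h1 : e < δ / q := hed.trans_le ((min_le_left _ _).trans (min_le_left _ _))
  have h2 : e < 1 := hed.trans_le ((min_le_left _ _).trans (min_le_right _ _))
  have h3 : e < η / (4 * q * (M + 1)) := hed.trans_le ((min_le_right _ _).trans (min_le_left _ _))
  have h4 : |s - t| < 1 / (q : ℝ) ^ 2 - |t - p / q| :=
    hs.trans_le ((min_le_right _ _).trans (min_le_right _ _))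
  rw [lt_div_iff₀ (by positivity)] at h3
  rw [lt_div_iff₀ hqr] at h1
  have h5 : |s - p / q| ≤ 1 / (q : ℝ) ^ 2 := by
    have := abs_sub_le s t (p / q)
    linarith
  have hN2 : ⌈1 / e⌉₊ * e < 1 + e := by
    have := Nat.ceil_lt_add_one (a := 1 / e) (by positivity)
    calc ⌈1 / e⌉₊ * e < (1 / e + 1) * e := by gcongr
      _ = 1 + e := by field_simp
  have key := sum_bound q hq (fun j => G (j * e)) (fun j => Int.fract (j * s) - 1 / 2) M (5 / 2) (η / 8)
    (fun j => hM _) (by positivity) (by norm_num) ?_ ?_ ?_ ⌈1 / e⌉₊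
  · rw [abs_mul, abs_of_pos he]
    calc _ ≤ e * (⌈1 / e⌉₊ * (M * (5 / 2) / q + η / 8) + q * M) := by gcongr
      _ = (⌈1 / e⌉₊ * e) * (M * (5 / 2) / q + η / 8) + e * q * M := by ring
      _ ≤ 2 * (η / 8 + η / 8) + η / 4 := by
        have : e * q * M ≤ η / 4 := by nlinarith [mul_pos he hqr]
        have : (⌈1 / e⌉₊ * e) * (M * (5 / 2) / q + η / 8) ≤ 2 * (η / 8 + η / 8) := by
          gcongr
          linarith
        linarith
      _ ≤ η := by linarith
  · intro j i hi
    have hi' : (i : ℝ) < q := by exact_mod_cast hi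
    have := @h (((j + i : ℕ) : ℝ) * e) (j * e) (by
      rw [Real.dist_eq]; push_cast
      rw [show ((j : ℝ) + i) * e - j * e = i * e by ring, abs_of_nonneg (by positivity)]
      nlinarith)
    rw [Real.dist_eq] at this
    exact this.le
  · intro j
    have := Int.fract_nonneg ((j : ℝ) * s)
    have := Int.fract_lt_one ((j : ℝ) * s)
    rw [abs_le]; constructor <;> linarith
  · intro j
    have := block_bound q hq p hpq (j * s) s h5
    simpa [add_mul] using this

lemma indicator_eq (y s : ℝ) (h0 : 0 ≤ y) (h1 : y < 1) :
    (if y ≥ 1 - Int.fract s then (1 : ℝ) else 0) = y + (Int.fract s - 1 / 2) - (Int.fract (s + y) - 1 / 2) := by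
  have f0 := Int.fract_nonneg s
  have f1 := Int.fract_lt_one s
  have e := Int.floor_add_fract s
  split_ifs with h
  · have : Int.fract (s + y) = Int.fract s + y - 1 := by
      rw [Int.fract_eq_iff]
      refine ⟨by linarith, by linarith, ⌊s⌋ + 1, ?_⟩
      push_cast; linarith
    rw [this]; ring
  · have : Int.fract (s + y) = Int.fract s + y := by
      rw [Int.fract_eq_iff]
      refine ⟨by linarith, by linarith, ⌊s⌋, ?_⟩
      linarith
    rw [this]; ring

lemma extend (f : ℝ → ℝ) (hf : ContinuousOn f (Set.Icc 0 1)) :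
    ∃ G : ℝ → ℝ, UniformContinuous G ∧ (∃ M, ∀ x, |G x| ≤ M) ∧ ∀ x ∈ Set.Icc (0 : ℝ) 1, G x = f x := by
  have hc : Continuous (Set.domRestrict (Set.Icc (0 : ℝ) 1) f) := continuousOn_iff_continuous_domRestrict.1 hf
  refine ⟨Set.IccExtend (zero_le_one' ℝ) (Set.domRestrict (Set.Icc (0 : ℝ) 1) f), ?_, ?_, ?_⟩
  · have h1 := CompactSpace.uniformContinuous_of_continuous hc
    exact h1.comp (LipschitzWith.projIcc (zero_le_one' ℝ)).uniformContinuous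
  · obtain ⟨M, hM⟩ := isCompact_Icc.exists_bound_of_continuousOn hf
    exact ⟨M, fun x => hM _ (Set.projIcc (0:ℝ) 1 (zero_le_one' ℝ) x).2⟩
  · intro x hx
    rw [Set.IccExtend_of_mem _ _ hx]; rfl

theorem stmt_13 (t : ℝ) (ht : Irrational t) (ε : ℕ → ℝ) (hε : ∀ n, 1 ≤ n → 0 < ε n)
    (hε0 : Tendsto ε atTop (nhds 0)) (f : ℝ → ℝ) (hf : ContinuousOn f (Set.Icc 0 1)) :
    Tendsto
      (fun n : ℕ =>
        ε n * ∑ j ∈ Finset.Icc 1 (⌈1 / ε n⌉₊ - 1),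
          f ((j : ℝ) * ε n) *
            (if (j : ℝ) * ε n ≥ 1 - Int.fract ((j : ℝ) * t) then (1 : ℝ) else 0))
      atTop (nhds (∫ x in (0 : ℝ)..1, x * f x)) := by
  obtain ⟨G, hG, ⟨M, hM⟩, hGf⟩ := extend f hf
  obtain ⟨H, hH, ⟨M', hM'⟩, hHf⟩ := extend (fun x => x * f x) (continuousOn_id.mul hf)
  have hI : ∫ x in (0 : ℝ)..1, x * f x = ∫ x in (0 : ℝ)..1, H x := by
    apply intervalIntegral.integral_congr
    intro x hx
    rw [Set.uIcc_of_le zero_le_one] at hx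
    exact (hHf x hx).symm
  rw [hI, Metric.tendsto_atTop']
  intro η hη
  obtain ⟨δ₁, hδ₁, h₁⟩ := riemann H hH M' hM' (η / 4) (by positivity)
  obtain ⟨δ₂, hδ₂, h₂⟩ := weighted t ht G hG M hM (η / 4) (by positivity)
  obtain ⟨n₀, hn₀⟩ := Metric.tendsto_atTop.1 hε0 (min δ₁ δ₂) (by positivity)
  refine ⟨n₀, fun n hn => ?_⟩
  have he : 0 < ε n := hε n (by omega)
  have hed := hn₀ n hn.le
  rw [Real.dist_eq, sub_zero, abs_of_pos he] at hed
  have hed1 := hed.trans_le (min_le_left _ _)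
  have hed2 := hed.trans_le (min_le_right _ _)
  set e := ε n
  have A := h₁ e he hed1
  have B := h₂ e he hed2 t (by simpa using hδ₂)
  have C := h₂ e he hed2 (t + e) (by simpa [abs_of_pos he] using hed2)
  have hN : 0 < ⌈1 / e⌉₊ := Nat.ceil_pos.2 (by positivity)
  have hsum : ∑ j ∈ Finset.Icc 1 (⌈1 / e⌉₊ - 1),
          f ((j : ℝ) * e) * (if (j : ℝ) * e ≥ 1 - Int.fract ((j : ℝ) * t) then (1 : ℝ) else 0)
      = ∑ j ∈ range ⌈1 / e⌉₊,
          f ((j : ℝ) * e) * (if (j : ℝ) * e ≥ 1 - Int.fract ((j : ℝ) * t) then (1 : ℝ) else 0) := by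
    apply Finset.sum_subset
    · intro j hj
      simp only [Finset.mem_Icc, Finset.mem_range] at *
      omega
    · intro j hj hj'
      simp only [Finset.mem_Icc, Finset.mem_range] at *
      have : j = 0 := by omega
      subst this
      simp
  have hsum2 : ∑ j ∈ range ⌈1 / e⌉₊,
          f ((j : ℝ) * e) * (if (j : ℝ) * e ≥ 1 - Int.fract ((j : ℝ) * t) then (1 : ℝ) else 0)
      = ∑ j ∈ range ⌈1 / e⌉₊, H (j * e)
        + ∑ j ∈ range ⌈1 / e⌉₊, G (j * e) * (Int.fract (j * t) - 1 / 2)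
        - ∑ j ∈ range ⌈1 / e⌉₊, G (j * e) * (Int.fract (j * (t + e)) - 1 / 2) := by
    rw [← Finset.sum_add_distrib, ← Finset.sum_sub_distrib]
    apply Finset.sum_congr rfl
    intro j hj
    have hj1 : (j : ℝ) * e < 1 := by
      have := Nat.lt_ceil.1 (Finset.mem_range.1 hj)
      rwa [lt_div_iff₀ he] at this
    have hj0 : 0 ≤ (j : ℝ) * e := by positivity
    rw [indicator_eq _ _ hj0 hj1, hGf _ ⟨hj0, hj1.le⟩, hHf _ ⟨hj0, hj1.le⟩, mul_add (j : ℝ) t e]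
    ring
  rw [hsum, hsum2, Real.dist_eq, abs_lt]
  rw [abs_le] at A B C
  constructor <;> linarith
end
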